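/- (The KŁR conjecture.) For every finite simple graph H with at least 3 vertices and at least one edge and every positive real β, there exist positive constants C, n₀, and ε such that the following holds. For every integer n ≥ n₀ and every integer m with m ≥ C·n^{2 − 1/m₂(H)}: |G*(H, n, m, m/n², ε)| ≤ β^m · binom(n², m)^{e(H)}, where G*(H, n, m, p, ε) is the set of graphs in G(H, n, m, p, ε) containing no canonical copy of H. -/

import Mathlib

attribute [local instance] Classical.propDecidable
/-- The `2`-density `m₂(H)` of a graph `H`: the maximum of `(e(H') - 1)/(v(H') - 2)` over
all subgraphs `H' ⊆ H` with at least `3` vertices. -/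
noncomputable def m2 {α : Type*} [Fintype α] (H : SimpleGraph α) : ℝ :=
  sSup {x : ℝ | ∃ s : Finset α, 3 ≤ s.card ∧
    x = ((Nat.card {e : Sym2 α // e ∈ H.edgeSet ∧ ∀ v ∈ e, v ∈ s} : ℝ) - 1) /
      ((s.card : ℝ) - 2)}

/-- The number of (ordered) edges of `G` from `A` to `B`. -/
noncomputable def bipCount {γ : Type*} (G : SimpleGraph γ) (A B : Finset γ) : ℕ :=
  Nat.card {e : γ × γ // e.1 ∈ A ∧ e.2 ∈ B ∧ G.Adj e.1 e.2}

/-- The edge density of `G` between `A` and `B`. -/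
noncomputable def bipDensity {γ : Type*} (G : SimpleGraph γ) (A B : Finset γ) : ℝ :=
  (bipCount G A B : ℝ) / ((A.card : ℝ) * (B.card : ℝ))

/-- The pair `(A, B)` is `(ε, p)`-regular in `G`. -/
def EpsPRegular {γ : Type*} (G : SimpleGraph γ) (ε p : ℝ) (A B : Finset γ) : Prop :=
  ∀ W₁ ⊆ A, ∀ W₂ ⊆ B, ε * (A.card : ℝ) ≤ (W₁.card : ℝ) → ε * (B.card : ℝ) ≤ (W₂.card : ℝ) →
    |bipDensity G W₁ W₂ - bipDensity G A B| ≤ ε * p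

/-- The fibre `V_i` over the vertex `i` of `H` in the blow-up, as a finset. -/
def fibre (h n : ℕ) (i : Fin h) : Finset (Fin h × Fin n) :=
  Finset.univ.filter fun v => v.1 = i

/-- `G ∈ 𝒢(H, n, m, p, ε)`: the vertex set of `G` is the disjoint union of the fibres
`V₁, …, V_{v(H)}`, each of size `n`; all edges of `G` lie between fibres `V_i, V_j` with
`{i, j} ∈ E(H)`, and for each edge `{i, j}` of `H` the bipartite graph of `G` between
`V_i` and `V_j` is `(ε, p)`-regular and has exactly `m` edges. -/
def InKLRFamily {h n : ℕ} (H : SimpleGraph (Fin h)) (m : ℕ) (p ε : ℝ)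
    (G : SimpleGraph (Fin h × Fin n)) : Prop :=
  (∀ a b : Fin h × Fin n, G.Adj a b → H.Adj a.1 b.1) ∧
    ∀ i j : Fin h, H.Adj i j →
      bipCount G (fibre h n i) (fibre h n j) = m ∧
        EpsPRegular G ε p (fibre h n i) (fibre h n j)

/-- `G` contains a canonical copy of `H`: a copy in which the image of each vertex `i` of
`H` lies in the fibre `V_i`. -/
def HasCanonicalCopy {h n : ℕ} (H : SimpleGraph (Fin h))
    (G : SimpleGraph (Fin h × Fin n)) : Prop :=
  ∃ ψ : Fin h → Fin n, ∀ i j : Fin h, H.Adj i j → G.Adj (i, ψ i) (j, ψ j)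



namespace KLR
open Finset

/-- `T` is a fingerprint map and `D` is a function of the fingerprint only. -/
def IsScheme {Ω : Type} (T D : Finset Ω → Finset Ω) : Prop :=
  (∀ X, T X ⊆ X) ∧ ∀ X Y, T X ⊆ Y → Y ⊆ X → T Y = T X ∧ D Y = D X

lemma isScheme_const {Ω : Type} (d : Finset Ω) :
    IsScheme (fun _ => (∅ : Finset Ω)) (fun _ => d) := by
  refine ⟨fun X => by simp, fun X Y _ _ => ⟨rfl, rfl⟩⟩

lemma isScheme_bind {Ω : Type} {T₁ D₁ : Finset Ω → Finset Ω}
    {T₂ D₂ : Finset Ω → Finset Ω → Finset Ω} (h₁ : IsScheme T₁ D₁)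
    (h₂ : ∀ d, IsScheme (T₂ d) (D₂ d)) :
    IsScheme (fun X => T₁ X ∪ T₂ (D₁ X) X) (fun X => D₂ (D₁ X) X) := by
  refine ⟨fun X => union_subset (h₁.1 X) ((h₂ _).1 X), fun X Y hT hY => ?_⟩
  obtain ⟨a, b⟩ := h₁.2 X Y (subset_union_left.trans hT) hY
  obtain ⟨c, d⟩ := (h₂ (D₁ X)).2 X Y (subset_union_right.trans hT) hY
  simp only [a, b, c, d, and_self]

lemma isScheme_ask {Ω : Type} (d₀ : Finset Ω) (T D : Ω → Finset Ω → Finset Ω)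
    (g : Finset Ω) (h : ∀ v ∈ g, IsScheme (T v) (D v)) :
    ∃ T' D' : Finset Ω → Finset Ω, IsScheme T' D' ∧ ∀ X,
      (∃ v ∈ g, v ∈ X ∧ T' X = insert v (T v X) ∧ D' X = D v X) ∨
      (Disjoint g X ∧ T' X = ∅ ∧ D' X = d₀) := by
  induction g using Finset.induction_on with
  | empty => exact ⟨_, _, isScheme_const d₀, fun X => Or.inr ⟨by simp, rfl, rfl⟩⟩
  | insert a g ha ih =>
    obtain ⟨T', D', hs, hX⟩ := ih (fun v hv => h v (mem_insert_of_mem hv))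
    have hA := h a (mem_insert_self a g)
    refine ⟨fun X => if a ∈ X then insert a (T a X) else T' X,
      fun X => if a ∈ X then D a X else D' X, ⟨?_, ?_⟩, ?_⟩
    · intro X
      by_cases haX : a ∈ X
      · simp only [haX, if_true]
        exact insert_subset haX (hA.1 X)
      · simp only [haX, if_false]; exact hs.1 X
    · intro X Y hT hY
      by_cases haX : a ∈ X
      · simp only [haX, if_true] at hT ⊢
        have haY : a ∈ Y := hT (mem_insert_self _ _)
        obtain ⟨c, d⟩ := hA.2 X Y ((subset_insert _ _).trans hT) hY
        simp only [haY, if_true, c, d, and_self]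
      · simp only [haX, if_false] at hT ⊢
        have haY : a ∉ Y := fun h => haX (hY h)
        simp only [haY, if_false]
        exact hs.2 X Y hT hY
    · intro X
      by_cases haX : a ∈ X
      · left
        refine ⟨a, mem_insert_self _ _, haX, ?_⟩
        simp only [haX, if_true, and_self]
      · simp only [haX, if_false]
        rcases hX X with ⟨v, hv, h1⟩ | ⟨h1, h2⟩
        · exact Or.inl ⟨v, mem_insert_of_mem hv, h1⟩
        · exact Or.inr ⟨by simp [disjoint_insert_left, haX, h1], h2⟩

/-- Weighted degree of a set. -/
noncomputable def wdeg {Ω : Type} [Fintype Ω] (μ : Finset Ω → ℝ) (S : Finset Ω) : ℝ :=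
  ∑ A, if S ⊆ A then μ A else 0

lemma link_sum {Ω : Type} [Fintype Ω] (v : Ω) (G : Finset Ω → ℝ) :
    (∑ B, if v ∉ B then G (insert v B) else 0) = ∑ A, if v ∈ A then G A else 0 := by
  rw [← sum_filter, ← sum_filter]
  refine sum_bij' (fun B _ => insert v B) (fun A _ => A.erase v) ?_ ?_ ?_ ?_ ?_
  · intro B hB; simp
  · intro B hB; simp
  · intro B hB; simp at hB; simp [hB]
  · intro B hB; simp at hB; simp [hB]
  · intro B hB; simp

/-- restricted link -/
noncomputable def ulink {Ω : Type} [Fintype Ω] (μ ν : Finset Ω → ℝ) (thr : ℕ → ℝ) (q : ℝ)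
    (v : Ω) (B : Finset Ω) : ℝ :=
  if v ∉ B ∧ ∀ S ⊆ B, S.Nonempty → wdeg ν S < thr S.card then μ (insert v B) / q else 0

lemma ulink_nonneg {Ω : Type} [Fintype Ω] {μ ν : Finset Ω → ℝ} {thr : ℕ → ℝ} {q : ℝ}
    (hq : 0 < q) (hμ : ∀ A, 0 ≤ μ A) (v : Ω) (B : Finset Ω) : 0 ≤ ulink μ ν thr q v B := by
  unfold ulink
  split_ifs
  · exact div_nonneg (hμ _) hq.le
  · exact le_rfl

lemma wdeg_ulink_le {Ω : Type} [Fintype Ω] {μ ν : Finset Ω → ℝ} {thr : ℕ → ℝ} {q : ℝ}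
    (hq : 0 < q) (hμ : ∀ A, 0 ≤ μ A) (v : Ω) (S : Finset Ω) :
    wdeg (ulink μ ν thr q v) S ≤ if v ∉ S then wdeg μ (insert v S) / q else 0 := by
  by_cases hvS : v ∉ S
  · rw [if_pos hvS]
    have h1 := link_sum v (fun A => if insert v S ⊆ A then μ A / q else 0)
    have h2 : wdeg μ (insert v S) / q =
        ∑ A, if v ∈ A then (if insert v S ⊆ A then μ A / q else 0) else 0 := by
      unfold wdeg
      rw [sum_div]
      refine sum_congr rfl fun A _ => ?_
      by_cases h : insert v S ⊆ A
      · have : v ∈ A := h (mem_insert_self _ _)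
        simp [h, this]
      · simp [h]
    rw [h2, ← h1]
    unfold wdeg
    refine sum_le_sum fun B _ => ?_
    unfold ulink
    by_cases hvB : v ∉ B
    · by_cases hSB : S ⊆ B
      · have : insert v S ⊆ insert v B := insert_subset_insert _ hSB
        simp only [hSB, hvB, this, if_true, true_and, not_false_eq_true]
        split_ifs
        · exact le_rfl
        · exact div_nonneg (hμ _) hq.le
      · simp only [hSB, if_false, hvB, if_true, not_false_eq_true]
        split_ifs
        · exact div_nonneg (hμ _) hq.le
        · exact le_rfl
    · simp [hvB]
  · rw [if_neg hvS]
    push Not at hvS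
    unfold wdeg
    refine le_of_eq (sum_eq_zero fun B _ => ?_)
    split_ifs with h
    · simp [ulink, h hvS]
    · rfl

lemma wdeg_ulink_sat {Ω : Type} [Fintype Ω] {μ ν : Finset Ω → ℝ} {thr : ℕ → ℝ} {q : ℝ}
    (v : Ω) (S : Finset Ω) (hS : S.Nonempty) (hsat : thr S.card ≤ wdeg ν S) :
    wdeg (ulink μ ν thr q v) S = 0 := by
  unfold wdeg
  refine sum_eq_zero fun B _ => ?_
  split_ifs with h
  · unfold ulink
    rw [if_neg]
    rintro ⟨_, h2⟩
    exact absurd (h2 S h hS) (not_lt.2 hsat)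
  · rfl

lemma wdeg_nonneg {Ω : Type} [Fintype Ω] {μ : Finset Ω → ℝ} (hμ : ∀ A, 0 ≤ μ A) (S) :
    0 ≤ wdeg μ S := sum_nonneg fun A _ => by split_ifs; exacts [hμ _, le_rfl]

lemma sum_wdeg {Ω : Type} [Fintype Ω] {ν : Finset Ω → ℝ} {k : ℕ}
    (hk : ∀ A, ν A ≠ 0 → A.card = k) : ∑ S, wdeg ν S = 2 ^ k * ∑ A, ν A := by
  unfold wdeg
  rw [sum_comm, mul_sum]
  refine sum_congr rfl fun A _ => ?_
  by_cases h : ν A = 0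
  · simp [h]
  · rw [← sum_filter, sum_const]
    have : (univ.filter fun S => S ⊆ A) = A.powerset := by ext; simp
    rw [this, card_powerset, hk A h]; simp

/-- the many-good-vertices estimate -/
lemma good_count {Ω : Type} [Fintype Ω] {μ ν : Finset Ω → ℝ} {k : ℕ} {K q N : ℝ}
    (hK : 0 < K) (hq : 0 < q) (hN : 0 < N) (hΩ : (Fintype.card Ω : ℝ) ≤ N)
    (hμ : ∀ A, 0 ≤ μ A) (hμk : ∀ A, μ A ≠ 0 → A.card = k + 1) (hμ1 : 1 ≤ ∑ A, μ A)
    (hμd : ∀ S : Finset Ω, S.Nonempty → wdeg μ S ≤ K * q ^ (S.card - 1) / N)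
    (hν : ∀ A, 0 ≤ ν A) (hνk : ∀ A, ν A ≠ 0 → A.card = k) (hν1 : ∑ A, ν A ≤ 1) :
    N / (4 * K) ≤ ((univ.filter fun v => 1 / (4 * (q * N)) ≤
      ∑ B, ulink μ ν (fun s => 2 ^ (k + 1) * K * q ^ (s - 1) / N) q v B).card : ℝ) := by
  set thr : ℕ → ℝ := fun s => 2 ^ (k + 1) * K * q ^ (s - 1) / N with hthr
  set U : Ω → ℝ := fun v => ∑ B, ulink μ ν thr q v B with hU
  set G : Finset Ω → ℝ := fun A =>
    if ∀ S ⊆ A, S.Nonempty → wdeg ν S < thr S.card then μ A else 0 with hG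
  have hG0 : ∀ A, 0 ≤ G A := fun A => by simp only [hG]; split_ifs; exacts [hμ _, le_rfl]
  have h1 : ∀ v, (∑ A, if v ∈ A then G A else 0) ≤ q * U v := by
    intro v
    rw [← link_sum, hU, mul_sum]
    refine sum_le_sum fun B _ => ?_
    by_cases hvB : v ∉ B
    · simp only [hvB, not_false_eq_true, if_true, hG, ulink, true_and]
      split_ifs with a b b
      · rw [mul_div_cancel₀ _ hq.ne']
      · exact absurd (fun S hS => a S (hS.trans (subset_insert _ _))) b
      · exact mul_nonneg hq.le (div_nonneg (hμ _) hq.le)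
      · simp
    · simp [hvB, ulink]
  have h2 : ∑ A, G A ≤ ∑ v, ∑ A, if v ∈ A then G A else 0 := by
    rw [sum_comm]
    refine sum_le_sum fun A _ => ?_
    rw [← sum_filter, sum_const]
    by_cases hA : μ A = 0
    · have : G A = 0 := by simp [hG, hA]
      simp [this]
    · have : (univ.filter fun v => v ∈ A) = A := by ext; simp
      rw [this, hμk A hA, nsmul_eq_mul]
      have := hG0 A
      push_cast
      nlinarith [mul_nonneg (Nat.cast_nonneg (α := ℝ) k) this]
  have h3 : (∑ A, μ A) - ∑ A, G A ≤ 1 / 2 := by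
    have a : (∑ A, μ A) - ∑ A, G A ≤
        ∑ S, if S.Nonempty ∧ thr S.card ≤ wdeg ν S then wdeg μ S else 0 := by
      rw [← sum_sub_distrib]
      have : ∀ S : Finset Ω, (if S.Nonempty ∧ thr S.card ≤ wdeg ν S then wdeg μ S else 0) =
          ∑ A, if S.Nonempty ∧ thr S.card ≤ wdeg ν S then (if S ⊆ A then μ A else 0) else 0 := by
        intro S; split_ifs <;> simp [wdeg]
      simp_rw [this]
      rw [sum_comm]
      refine sum_le_sum fun A _ => ?_
      have hnn : ∀ S : Finset Ω, 0 ≤ if S.Nonempty ∧ thr S.card ≤ wdeg ν S then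
          (if S ⊆ A then μ A else 0) else 0 := by
        intro S; split_ifs; exacts [hμ _, le_rfl, le_rfl]
      simp only [hG]
      split_ifs with h
      · simp only [sub_self]
        exact sum_nonneg fun S _ => hnn S
      · push Not at h
        obtain ⟨S, hS, hSn, hSt⟩ := h
        refine le_trans ?_ (single_le_sum (fun S _ => hnn S) (mem_univ S))
        simp [hS, hSn, hSt]
    refine a.trans ?_
    have b : ∀ S : Finset Ω, (if S.Nonempty ∧ thr S.card ≤ wdeg ν S then wdeg μ S else 0) ≤
        1 / 2 ^ (k + 1) * wdeg ν S := by
      intro S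
      split_ifs with h
      · refine (hμd S h.1).trans ?_
        rw [div_mul_eq_mul_div, one_mul, le_div_iff₀ (by positivity)]
        refine le_trans (le_of_eq ?_) h.2
        simp only [hthr]; ring
      · exact mul_nonneg (by positivity) (wdeg_nonneg hν S)
    refine (sum_le_sum fun S _ => b S).trans ?_
    rw [← mul_sum, sum_wdeg hνk, pow_succ]
    have : (0:ℝ) < 2 ^ k := by positivity
    field_simp
    exact hν1
  have h4 : 1 / 2 ≤ q * ∑ v, U v := by
    rw [mul_sum]
    have := sum_le_sum (s := univ) fun v _ => h1 v
    linarith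
  have h5 : ∀ v, q * U v ≤ K / N := by
    intro v
    have a := wdeg_ulink_le (ν := ν) (thr := thr) hq hμ v ∅
    simp only [notMem_empty, not_false_eq_true, if_true] at a
    have b := hμd {v} (by simp)
    simp only [card_singleton, Nat.sub_self, pow_zero, mul_one] at b
    have c : wdeg (ulink μ ν thr q v) ∅ = U v := by simp [wdeg, hU]
    rw [c] at a
    rw [le_div_iff₀ hq] at a
    have : (insert v (∅ : Finset Ω)) = {v} := by simp
    rw [this] at a
    linarith
  set g := univ.filter fun v => 1 / (4 * (q * N)) ≤ U v with hg
  have h6 : q * ∑ v, U v ≤ (g.card : ℝ) * (K / N) + 1 / 4 := by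
    rw [mul_sum]
    rw [← sum_filter_add_sum_filter_not univ (fun v => 1 / (4 * (q * N)) ≤ U v)]
    refine add_le_add ?_ ?_
    · refine (sum_le_card_nsmul _ _ _ fun v _ => h5 v).trans ?_
      rw [nsmul_eq_mul]
    · refine (sum_le_card_nsmul _ _ (1 / (4 * N)) fun v hv => ?_).trans ?_
      · simp only [mem_filter, mem_univ, true_and, not_le] at hv
        have := mul_le_mul_of_nonneg_left hv.le hq.le
        refine this.trans (le_of_eq ?_)
        field_simp
      · rw [nsmul_eq_mul]
        have : ((univ.filter fun v => ¬ 1 / (4 * (q * N)) ≤ U v).card : ℝ) ≤ N := by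
          refine le_trans ?_ hΩ
          exact_mod_cast card_le_univ _
        calc _ ≤ N * (1 / (4 * N)) := by gcongr
          _ = 1 / 4 := by field_simp
  have h7 : 1 / 4 ≤ (g.card : ℝ) * (K / N) := by linarith
  rw [div_le_iff₀ (by positivity)]
  rw [← mul_div_assoc, le_div_iff₀ hN] at h7
  linarith

lemma wdeg_add {Ω : Type} [Fintype Ω] (μ ν : Finset Ω → ℝ) (S : Finset Ω) :
    wdeg (fun A => μ A + ν A) S = wdeg μ S + wdeg ν S := by
  unfold wdeg
  rw [← sum_add_distrib]
  refine sum_congr rfl fun A _ => ?_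
  split_ifs <;> simp

/-- One-step container lemma. -/
lemma container_step (k : ℕ) : ∀ K : ℝ, 0 < K → ∃ δ : ℝ, 0 < δ ∧ ∃ L : ℝ, 0 < L ∧
    ∀ (Ω : Type) [Fintype Ω] (N q : ℝ) (μ : Finset Ω → ℝ), 0 < N → 0 < q →
      (Fintype.card Ω : ℝ) ≤ N → (∀ A, 0 ≤ μ A) → (∀ A, μ A ≠ 0 → A.card = k) →
      1 ≤ ∑ A, μ A →
      (∀ S : Finset Ω, S.Nonempty → wdeg μ S ≤ K * q ^ (S.card - 1) / N) →
      ∃ T D : Finset Ω → Finset Ω, IsScheme T D ∧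
        (∀ X, ((T X).card : ℝ) ≤ L * (q * N + 1)) ∧
        ∀ X, (∀ A, μ A ≠ 0 → ¬ A ⊆ X) → Disjoint (D X) X ∧ δ * N ≤ ((D X).card : ℝ) ∧
          ∀ v ∈ D X, ∃ A, μ A ≠ 0 ∧ v ∈ A := by
  induction k with
  | zero =>
    intro K hK
    refine ⟨1, one_pos, 1, one_pos, ?_⟩
    intro Ω _ N q μ hN hq hΩ hμ hμk hμ1 hμd
    refine ⟨_, _, isScheme_const ∅, fun X => by simp; positivity, fun X hX => ?_⟩
    exfalso
    have : ∑ A, μ A ≠ 0 := by linarith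
    obtain ⟨A, _, hA⟩ := exists_ne_zero_of_sum_ne_zero this
    have h0 := hμk A hA
    rw [card_eq_zero] at h0
    exact hX A hA (by simp [h0])
  | succ k ih =>
    intro K hK
    obtain ⟨δ, hδ, L, hL, H⟩ := ih (2 ^ (k + 1) * K + K) (by positivity)
    refine ⟨min δ (1 / (4 * K)), lt_min hδ (by positivity), 4 + L, by positivity, ?_⟩
    intro Ω _ N q μ hN hq hΩ hμ hμk hμ1 hμd
    set thr : ℕ → ℝ := fun s => 2 ^ (k + 1) * K * q ^ (s - 1) / N with hthr
    have key : ∀ (j : ℕ) (ν : Finset Ω → ℝ), (∀ A, 0 ≤ ν A) → (∀ A, ν A ≠ 0 → A.card = k) →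
        (∀ S : Finset Ω, S.Nonempty →
          wdeg ν S ≤ (2 ^ (k + 1) * K + K) * q ^ (S.card - 1) / N) →
        (∀ B, ν B ≠ 0 → ∃ v, μ (insert v B) ≠ 0) →
        1 ≤ (∑ A, ν A) + j / (4 * (q * N)) →
        ∃ T D : Finset Ω → Finset Ω, IsScheme T D ∧
          (∀ X, ((T X).card : ℝ) ≤ j + L * (q * N + 1)) ∧
          ∀ X, (∀ A, μ A ≠ 0 → ¬ A ⊆ X) → (∀ A, ν A ≠ 0 → ¬ A ⊆ X) →
            Disjoint (D X) X ∧ min δ (1 / (4 * K)) * N ≤ ((D X).card : ℝ) ∧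
            ∀ v ∈ D X, ∃ A, μ A ≠ 0 ∧ v ∈ A := by
      intro j
      induction j with
      | zero =>
        intro ν hν hνk hνd hνs hν1
        simp only [Nat.cast_zero, zero_div, add_zero] at hν1
        obtain ⟨T, D, hs, hc, hX⟩ := H Ω N q ν hN hq hΩ hν hνk hν1 hνd
        refine ⟨T, D, hs, fun X => by simpa using hc X, fun X _ hI => ?_⟩
        obtain ⟨a, b, c⟩ := hX X hI
        refine ⟨a, le_trans (by gcongr; exact min_le_left _ _) b, fun v hv => ?_⟩
        obtain ⟨A, hA, hvA⟩ := c v hv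
        obtain ⟨u, hu⟩ := hνs A hA
        exact ⟨_, hu, mem_insert_of_mem hvA⟩
      | succ j ihj =>
        intro ν hν hνk hνd hνs hν1
        by_cases hbig : 1 ≤ ∑ A, ν A
        · obtain ⟨T, D, hs, hc, hX⟩ := H Ω N q ν hN hq hΩ hν hνk hbig hνd
          refine ⟨T, D, hs, fun X => (hc X).trans ?_, fun X _ hI => ?_⟩
          · push_cast; linarith [(Nat.cast_nonneg j : (0:ℝ) ≤ j)]
          obtain ⟨a, b, c⟩ := hX X hI
          refine ⟨a, le_trans (by gcongr; exact min_le_left _ _) b, fun v hv => ?_⟩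
          obtain ⟨A, hA, hvA⟩ := c v hv
          obtain ⟨u, hu⟩ := hνs A hA
          exact ⟨_, hu, mem_insert_of_mem hvA⟩
        push Not at hbig
        set g := univ.filter fun v => 1 / (4 * (q * N)) ≤ ∑ B, ulink μ ν thr q v B with hg
        have hgc : N / (4 * K) ≤ (g.card : ℝ) :=
          good_count hK hq hN hΩ hμ hμk hμ1 hμd hν hνk hbig.le
        have hul : ∀ v B, ulink μ ν thr q v B ≠ 0 → v ∉ B ∧ μ (insert v B) ≠ 0 := by
          intro v B h
          unfold ulink at h
          split_ifs at h with h'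
          · refine ⟨h'.1, fun h0 => h ?_⟩
            rw [h0, zero_div]
          · exact absurd rfl h
        have step : ∀ v, ∃ T D : Finset Ω → Finset Ω, v ∈ g → (IsScheme T D ∧
          (∀ X, ((T X).card : ℝ) ≤ j + L * (q * N + 1)) ∧
          ∀ X, (∀ A, μ A ≠ 0 → ¬ A ⊆ X) →
            (∀ A, ν A + ulink μ ν thr q v A ≠ 0 → ¬ A ⊆ X) →
            Disjoint (D X) X ∧ min δ (1 / (4 * K)) * N ≤ ((D X).card : ℝ) ∧
            ∀ v ∈ D X, ∃ A, μ A ≠ 0 ∧ v ∈ A) := by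
          intro v
          by_cases hv : v ∈ g
          swap
          · exact ⟨fun _ => ∅, fun _ => ∅, fun h => absurd h hv⟩
          have hor : ∀ A, ν A + ulink μ ν thr q v A ≠ 0 →
              ν A ≠ 0 ∨ ulink μ ν thr q v A ≠ 0 := by
            intro A h
            by_contra hc
            push Not at hc
            exact h (by rw [hc.1, hc.2, add_zero])
          refine Exists.imp (fun T => Exists.imp fun D h => fun _ => h)
            (ihj (fun A => ν A + ulink μ ν thr q v A)
            (fun A => add_nonneg (hν A) (ulink_nonneg hq hμ v A)) ?_ ?_ ?_ ?_)
          · intro A h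
            rcases hor A h with h | h
            · exact hνk A h
            · obtain ⟨h1, h2⟩ := hul v A h
              have := hμk _ h2
              rw [card_insert_of_notMem h1] at this
              omega
          · intro S hS
            rw [wdeg_add]
            by_cases hsat : thr S.card ≤ wdeg ν S
            · rw [wdeg_ulink_sat v S hS hsat, add_zero]
              exact hνd S hS
            · push Not at hsat
              have h1 : wdeg (ulink μ ν thr q v) S ≤ K * q ^ (S.card - 1) / N := by
                refine (wdeg_ulink_le hq hμ v S).trans ?_
                split_ifs with hvS
                · positivity
                · have := hμd (insert v S) (by simp)
                  rw [card_insert_of_notMem hvS] at this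
                  have hS1 : S.card + 1 - 1 = (S.card - 1) + 1 := by
                    have := hS.card_pos
                    omega
                  rw [hS1, pow_succ] at this
                  rw [div_le_iff₀ hq]
                  refine this.trans (le_of_eq ?_)
                  ring
              have h2 : (2 ^ (k + 1) * K + K) * q ^ (S.card - 1) / N =
                thr S.card + K * q ^ (S.card - 1) / N := by simp only [hthr]; ring
              rw [h2]
              linarith
          · intro A h
            rcases hor A h with h | h
            · exact hνs A h
            · exact ⟨v, (hul v A h).2⟩
          · rw [sum_add_distrib]
            simp only [hg, mem_filter, mem_univ, true_and] at hv
            push_cast at hν1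
            rw [add_div] at hν1
            linarith
        choose T D hTD using step
        obtain ⟨T', D', hs, hX⟩ := isScheme_ask g T D g (fun v hv => (hTD v hv).1)
        refine ⟨T', D', hs, ?_, ?_⟩
        · intro X
          rcases hX X with ⟨v, hv, hvX, h1, h2⟩ | ⟨h0, h1, h2⟩
          · rw [h1]
            have a := (hTD v hv).2.1 X
            have b : ((insert v (T v X)).card : ℝ) ≤ (T v X).card + 1 := by
              exact_mod_cast card_insert_le _ _
            push_cast
            linarith
          · rw [h1]; simp; positivity
        · intro X hI hJ
          rcases hX X with ⟨v, hv, hvX, h1, h2⟩ | ⟨h0, h1, h2⟩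
          · rw [h2]
            refine (hTD v hv).2.2 X hI fun A hA hAX => ?_
            by_cases h : ν A = 0
            · rw [h, zero_add] at hA
              exact hI _ (hul v A hA).2 (insert_subset hvX hAX)
            · exact hJ A h hAX
          · rw [h2]
            refine ⟨h0, ?_, fun v hv => ?_⟩
            · refine le_trans ?_ hgc
              calc min δ (1 / (4 * K)) * N ≤ (1 / (4 * K)) * N := by
                    gcongr; exact min_le_right _ _
                _ = _ := by ring
            · simp only [hg, mem_filter, mem_univ, true_and] at hv
              have : ∑ B, ulink μ ν thr q v B ≠ 0 := by
                have : 0 < 1 / (4 * (q * N)) := by positivity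
                linarith
              obtain ⟨B, _, hB⟩ := exists_ne_zero_of_sum_ne_zero this
              exact ⟨_, (hul v B hB).2, mem_insert_self _ _⟩
    obtain ⟨T, D, hs, hc, hX⟩ := key ⌈4 * (q * N)⌉₊ (fun _ => 0) (fun _ => le_rfl)
      (fun A h => absurd rfl h) (fun S hS => by simp [wdeg]; positivity)
      (fun B h => absurd rfl h) (by
        rw [sum_const_zero, zero_add, le_div_iff₀ (by positivity), one_mul]
        exact Nat.le_ceil _)
    refine ⟨T, D, hs, fun X => (hc X).trans ?_, fun X hI => hX X hI (fun A h => absurd rfl h)⟩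
    have := Nat.ceil_lt_add_one (a := 4 * (q * N)) (by positivity)
    nlinarith [mul_pos hq hN]

/-- The container theorem. -/
theorem containers (k : ℕ) (K γ : ℝ) (hK : 0 < K) (hγ : 0 < γ) : ∃ L : ℝ, 0 < L ∧
    ∀ (Ω : Type) [Fintype Ω] (N q M : ℝ) (w : Finset Ω → ℝ), 0 < N → 0 < q → 0 < M →
      (Fintype.card Ω : ℝ) ≤ N → (∀ A, 0 ≤ w A) → (∀ A, w A ≠ 0 → A.card = k) →
      (∀ S : Finset Ω, S.Nonempty → wdeg w S ≤ K * M * q ^ (S.card - 1) / N) →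
      ∃ T D : Finset Ω → Finset Ω, IsScheme T D ∧
        (∀ X, ((T X).card : ℝ) ≤ L * (q * N + 1)) ∧
        ∀ X, (∀ A, w A ≠ 0 → ¬ A ⊆ X) → X ⊆ D X ∧
          (∑ A, if A ⊆ D X then w A else 0) < γ * M := by
  obtain ⟨δ, hδ, L, hL, H⟩ := container_step k (K / γ) (by positivity)
  refine ⟨(⌈1 / δ⌉₊ + 1) * L, by positivity, ?_⟩
  intro Ω _ N q M w hN hq hM hΩ hw hwk hwd
  have key : ∀ (j : ℕ) (U : Finset Ω), (U.card : ℝ) ≤ j * (δ * N) →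
      ∃ T D : Finset Ω → Finset Ω, IsScheme T D ∧
        (∀ X, ((T X).card : ℝ) ≤ j * L * (q * N + 1)) ∧
        ∀ X, (∀ A, w A ≠ 0 → ¬ A ⊆ X) → X ⊆ U → X ⊆ D X ∧
          (∑ A, if A ⊆ D X then w A else 0) < γ * M := by
    intro j
    induction j with
    | zero =>
      intro U hU
      have hU0 : U = ∅ := by
        rw [← card_eq_zero]
        have : (U.card : ℝ) ≤ 0 := by simpa using hU
        exact_mod_cast le_antisymm this (by positivity)
      refine ⟨_, _, isScheme_const ∅, fun X => by simp, fun X hI hXU => ?_⟩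
      subst hU0
      refine ⟨hXU, ?_⟩
      have : (∑ A, if A ⊆ (∅ : Finset Ω) then w A else 0) = 0 := by
        refine sum_eq_zero fun A _ => ?_
        split_ifs with h
        · by_contra h0
          exact hI A h0 (h.trans (by simp))
        · rfl
      rw [this]; positivity
    | succ j ihj =>
      intro U hU
      by_cases hsmall : (∑ A, if A ⊆ U then w A else 0) < γ * M
      · refine ⟨_, _, isScheme_const U, fun X => by simp; positivity, fun X _ hXU => ⟨hXU, hsmall⟩⟩
      push Not at hsmall
      set μ : Finset Ω → ℝ := fun A => (if A ⊆ U then w A else 0) / (γ * M) with hμdef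
      have hμw : ∀ A, μ A ≠ 0 → A ⊆ U ∧ w A ≠ 0 := by
        intro A h
        simp only [hμdef] at h
        split_ifs at h with h'
        · exact ⟨h', fun h0 => h (by rw [h0, zero_div])⟩
        · simp at h
      have hμle : ∀ A, μ A ≤ w A / (γ * M) := by
        intro A
        simp only [hμdef]
        have := hw A
        gcongr
        split_ifs <;> simp [this]
      obtain ⟨T₁, D₁, hs, hc, hX⟩ := H Ω N q μ hN hq hΩ
        (fun A => by simp only [hμdef]; have := hw A; split_ifs <;> positivity)
        (fun A h => hwk A (hμw A h).2)
        (by simp only [hμdef]; rw [← sum_div, le_div_iff₀ (by positivity), one_mul]; exact hsmall)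
        (by
          intro S hS
          have h1 : wdeg μ S ≤ wdeg w S / (γ * M) := by
            unfold wdeg
            rw [sum_div]
            refine sum_le_sum fun A _ => ?_
            split_ifs
            · exact hμle A
            · simp
          refine h1.trans ?_
          rw [div_le_iff₀ (by positivity)]
          refine (hwd S hS).trans (le_of_eq ?_)
          field_simp)
      have step : ∀ d : Finset Ω, ∃ T D : Finset Ω → Finset Ω, IsScheme T D ∧
          (∀ X, ((T X).card : ℝ) ≤ j * L * (q * N + 1)) ∧
          (d ⊆ U → δ * N ≤ d.card → ∀ X, (∀ A, w A ≠ 0 → ¬ A ⊆ X) → X ⊆ U \ d → X ⊆ D X ∧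
            (∑ A, if A ⊆ D X then w A else 0) < γ * M) := by
        intro d
        by_cases hd : d ⊆ U ∧ δ * N ≤ d.card
        · obtain ⟨T, D, h1, h2, h3⟩ := ihj (U \ d) (by
            have : ((U \ d).card : ℝ) = U.card - d.card := by
              rw [card_sdiff_of_subset hd.1, Nat.cast_sub (card_le_card hd.1)]
            rw [this]
            push_cast at hU
            linarith [hd.2])
          exact ⟨T, D, h1, h2, fun _ _ => h3⟩
        · exact ⟨_, _, isScheme_const ∅, fun X => by simp; positivity,
            fun a b => absurd ⟨a, b⟩ hd⟩
      choose T₂ D₂ hs₂ hc₂ hX₂ using step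
      refine ⟨_, _, isScheme_bind hs hs₂, fun X => ?_, fun X hI hXU => ?_⟩
      · have a : ((T₁ X ∪ T₂ (D₁ X) X).card : ℝ) ≤ (T₁ X).card + (T₂ (D₁ X) X).card := by
          exact_mod_cast card_union_le _ _
        have b := hc X
        have c := hc₂ (D₁ X) X
        push_cast
        linarith
      · obtain ⟨a, b, c⟩ := hX X (fun A h => hI A (hμw A h).2)
        refine hX₂ (D₁ X) ?_ b X hI ?_
        · intro v hv
          obtain ⟨A, hA, hvA⟩ := c v hv
          exact (hμw A hA).1 hvA
        · intro x hx
          rw [mem_sdiff]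
          exact ⟨hXU hx, fun h => disjoint_left.1 a h hx⟩
  obtain ⟨T, D, h1, h2, h3⟩ := key ⌈1 / δ⌉₊ univ (by
    have := Nat.le_ceil (1 / δ)
    rw [card_univ]
    rw [div_le_iff₀ hδ] at this
    nlinarith)
  refine ⟨T, D, h1, fun X => (h2 X).trans ?_, fun X hI => h3 X hI (subset_univ X)⟩
  have : 0 < q * N := by positivity
  gcongr
  linarith

end KLR


namespace KLR
open Finset

/-- block average with respect to a colouring -/
noncomputable def bavg {X κ : Type} [Fintype X] (C : X → κ) (f : X → ℝ) (k : κ) : ℝ :=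
  (∑ z ∈ univ.filter (fun z => C z = k), f z) / ((univ.filter fun z => C z = k).card : ℝ)

lemma bavg_inner {X κ : Type} [Fintype X] [Fintype κ] (C : X → κ) (f : X → ℝ) (φ : κ → ℝ) :
    ∑ z, bavg C f (C z) * φ (C z) = ∑ z, f z * φ (C z) := by
  rw [← sum_fiberwise (s := univ) (g := C) (f := fun z => bavg C f (C z) * φ (C z)),
    ← sum_fiberwise (s := univ) (g := C) (f := fun z => f z * φ (C z))]
  refine sum_congr rfl fun k _ => ?_
  have h1 : ∑ z ∈ univ.filter (fun z => C z = k), bavg C f (C z) * φ (C z) =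
      ∑ z ∈ univ.filter (fun z => C z = k), bavg C f k * φ k := by
    refine sum_congr rfl fun z hz => ?_
    simp only [mem_filter] at hz
    rw [hz.2]
  have h2 : ∑ z ∈ univ.filter (fun z => C z = k), f z * φ (C z) =
      ∑ z ∈ univ.filter (fun z => C z = k), f z * φ k := by
    refine sum_congr rfl fun z hz => ?_
    simp only [mem_filter] at hz
    rw [hz.2]
  rw [h1, h2, sum_const, ← sum_mul, nsmul_eq_mul, ← mul_assoc]
  congr 1
  by_cases h : (univ.filter fun z => C z = k) = ∅
  · simp [h]
  · unfold bavg
    have : ((univ.filter fun z => C z = k).card : ℝ) ≠ 0 := by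
      simpa using h
    field_simp

lemma bavg_nonneg {X κ : Type} [Fintype X] (C : X → κ) {f : X → ℝ} (hf : ∀ z, 0 ≤ f z) (k : κ) :
    0 ≤ bavg C f k := div_nonneg (sum_nonneg fun z _ => hf z) (Nat.cast_nonneg _)

lemma bavg_le_one {X κ : Type} [Fintype X] (C : X → κ) {f : X → ℝ} (hf : ∀ z, f z ≤ 1) (k : κ) :
    bavg C f k ≤ 1 := by
  refine div_le_one_of_le₀ ?_ (Nat.cast_nonneg _)
  refine (sum_le_card_nsmul _ _ 1 fun z _ => hf z).trans ?_
  simp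

/-- energy increment -/
lemma energy_incr {X κ κ' : Type} [Fintype X] [Fintype κ] [Fintype κ'] (C : X → κ) (C' : X → κ')
    (π : κ' → κ) (hπ : ∀ z, C z = π (C' z)) (f : X → ℝ) (φ : κ' → ℝ) (hφ : ∀ k, φ k ^ 2 ≤ 1) :
    (∑ z, (bavg C f (C z) - f z) * φ (C' z)) ^ 2 ≤
      (Fintype.card X : ℝ) *
        (∑ z, bavg C' f (C' z) ^ 2 - ∑ z, bavg C f (C z) ^ 2) := by
  have h1 : ∑ z, (bavg C f (C z) - f z) * φ (C' z) =
      ∑ z, (bavg C f (C z) - bavg C' f (C' z)) * φ (C' z) := by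
    simp only [sub_mul, sum_sub_distrib]
    rw [bavg_inner C' f φ]
  have h2 : ∑ z, bavg C' f (C' z) ^ 2 - ∑ z, bavg C f (C z) ^ 2 =
      ∑ z, (bavg C f (C z) - bavg C' f (C' z)) ^ 2 := by
    have a := bavg_inner C' f (fun k => bavg C f (π k))
    have b := bavg_inner C f (fun k => bavg C f k)
    have c : ∑ z, (bavg C f (C z) - bavg C' f (C' z)) ^ 2 =
        ∑ z, bavg C f (C z) ^ 2 - 2 * ∑ z, bavg C' f (C' z) * bavg C f (π (C' z)) +
        ∑ z, bavg C' f (C' z) ^ 2 := by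
      rw [mul_sum, ← sum_sub_distrib, ← sum_add_distrib]
      refine sum_congr rfl fun z _ => ?_
      rw [← hπ]; ring
    have d : ∑ z, bavg C f (C z) * bavg C f (C z) = ∑ z, bavg C f (C z) ^ 2 :=
      sum_congr rfl fun z _ => by ring
    simp only [← hπ] at a c
    rw [c, a, ← b, d]; ring
  rw [h1, h2]
  refine (sum_mul_sq_le_sq_mul_sq _ _ _).trans ?_
  rw [mul_comm]
  gcongr
  refine (sum_le_card_nsmul _ _ 1 fun z _ => hφ _).trans ?_
  simp

/-- product colouring -/
def pcol {n : ℕ} {κ : Type} (c : Fin n → κ) (z : Fin n × Fin n) : κ × κ := (c z.1, c z.2)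

/-- total energy -/
noncomputable def energy {E : Type} [Fintype E] {n : ℕ} {κ : Type}
    (f : E → Fin n × Fin n → ℝ) (c : Fin n → κ) : ℝ :=
  ∑ e, ∑ z : Fin n × Fin n, bavg (pcol c) (f e) (pcol c z) ^ 2

lemma energy_le {E : Type} [Fintype E] {n : ℕ} {κ : Type} {f : E → Fin n × Fin n → ℝ}
    (h0 : ∀ e z, 0 ≤ f e z) (h1 : ∀ e z, f e z ≤ 1) (c : Fin n → κ) :
    energy f c ≤ (Fintype.card E : ℝ) * (n : ℝ) ^ 2 := by
  unfold energy
  have : ∀ e, ∑ z : Fin n × Fin n, bavg (pcol c) (f e) (pcol c z) ^ 2 ≤ (n : ℝ) ^ 2 := by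
    intro e
    refine (sum_le_card_nsmul _ _ 1 fun z _ => ?_).trans ?_
    · exact pow_le_one₀ (bavg_nonneg _ (h0 e) _) (bavg_le_one _ (h1 e) _)
    · simp [sq]
  refine (sum_le_card_nsmul _ _ _ fun e _ => this e).trans ?_
  simp

lemma energy_refine {E : Type} [Fintype E] {n : ℕ} (hn : 0 < n) (ε : ℝ) (hε : 0 < ε)
    (f : E → Fin n × Fin n → ℝ) {κ : Type} [Fintype κ] (c : Fin n → κ) (e : E)
    (W₁ W₂ : Finset (Fin n))
    (hW : ε * (n : ℝ) ^ 2 < ∑ x ∈ W₁, ∑ y ∈ W₂,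
      (bavg (pcol c) (f e) (pcol c (x, y)) - f e (x, y))) :
    energy f c + ε ^ 2 * (n : ℝ) ^ 2 <
      energy f (fun x => (c x, decide (x ∈ W₁), decide (x ∈ W₂))) := by
  set c' : Fin n → κ × Bool × Bool := fun x => (c x, decide (x ∈ W₁), decide (x ∈ W₂)) with hc'
  have hπ : ∀ z, pcol c z = (fun k : (κ × Bool × Bool) × (κ × Bool × Bool) => (k.1.1, k.2.1))
    (pcol c' z) := fun z => rfl
  have hN : (0 : ℝ) < (Fintype.card (Fin n × Fin n) : ℝ) := by
    simp [hn]
  have mono : ∀ e', ∑ z, bavg (pcol c) (f e') (pcol c z) ^ 2 ≤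
      ∑ z, bavg (pcol c') (f e') (pcol c' z) ^ 2 := by
    intro e'
    have := energy_incr (pcol c) (pcol c') (fun k => (k.1.1, k.2.1)) hπ (f e') (fun _ => 0) (fun _ => by simp)
    simp only [mul_zero, sum_const_zero, zero_pow two_ne_zero] at this
    have := nonneg_of_mul_nonneg_right this hN
    linarith
  have big : ∑ z, bavg (pcol c) (f e) (pcol c z) ^ 2 + ε ^ 2 * (n : ℝ) ^ 2 <
      ∑ z, bavg (pcol c') (f e) (pcol c' z) ^ 2 := by
    have key := energy_incr (pcol c) (pcol c') (fun k => (k.1.1, k.2.1)) hπ (f e)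
      (fun k => if k.1.2.1 = true ∧ k.2.2.2 = true then 1 else 0)
      (fun k => by split_ifs <;> simp)
    have hs : ∑ z, (bavg (pcol c) (f e) (pcol c z) - f e z) *
        (if (pcol c' z).1.2.1 = true ∧ (pcol c' z).2.2.2 = true then 1 else 0) =
        ∑ x ∈ W₁, ∑ y ∈ W₂, (bavg (pcol c) (f e) (pcol c (x, y)) - f e (x, y)) := by
      rw [← sum_product']
      simp only [mul_ite, mul_one, mul_zero]
      rw [← sum_filter]
      refine sum_congr ?_ fun _ _ => rfl
      ext ⟨x, y⟩
      simp [pcol, hc']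
    rw [hs] at key
    have hc : (Fintype.card (Fin n × Fin n) : ℝ) = (n : ℝ) ^ 2 := by simp [sq]
    rw [hc] at key
    have hn2 : (0 : ℝ) < (n : ℝ) ^ 2 := by positivity
    have h3 : (ε * (n : ℝ) ^ 2) ^ 2 < (∑ x ∈ W₁, ∑ y ∈ W₂,
      (bavg (pcol c) (f e) (pcol c (x, y)) - f e (x, y))) ^ 2 := by
      gcongr
    have h4 := h3.trans_le key
    have h5 : (ε * (n : ℝ) ^ 2) ^ 2 = (n : ℝ) ^ 2 * (ε ^ 2 * (n : ℝ) ^ 2) := by ring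
    rw [h5] at h4
    have := lt_of_mul_lt_mul_left h4 hn2.le
    linarith
  unfold energy
  rw [← add_sum_erase _ _ (mem_univ e), ← add_sum_erase univ
    (fun e => ∑ z : Fin n × Fin n, bavg (pcol c') (f e) (pcol c' z) ^ 2) (mem_univ e)]
  have := sum_le_sum (s := univ.erase e) fun e' _ => mono e'
  linarith

/-- Frieze-Kannan weak regularity -/
lemma weak_reg {E : Type} [Fintype E] {n : ℕ} (hn : 0 < n) (ε : ℝ) (hε : 0 < ε)
    (f : E → Fin n × Fin n → ℝ) (h0 : ∀ e z, 0 ≤ f e z) (h1 : ∀ e z, f e z ≤ 1) :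
    ∀ (j : ℕ) (κ : Type) [Fintype κ] (c : Fin n → κ),
      (Fintype.card E : ℝ) * (n : ℝ) ^ 2 ≤ energy f c + j * (ε ^ 2 * (n : ℝ) ^ 2) →
      ∃ (κ' : Type) (_ : Fintype κ') (c' : Fin n → κ'),
        Fintype.card κ' ≤ 4 ^ j * Fintype.card κ ∧
        ∀ e (W₁ W₂ : Finset (Fin n)), ∑ x ∈ W₁, ∑ y ∈ W₂,
          (bavg (pcol c') (f e) (pcol c' (x, y)) - f e (x, y)) ≤ ε * (n : ℝ) ^ 2 := by
  intro j
  induction j with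
  | zero =>
    intro κ _ c hc
    refine ⟨κ, inferInstance, c, by simp, ?_⟩
    by_contra hcon
    push Not at hcon
    obtain ⟨e, W₁, W₂, hW⟩ := hcon
    have a := energy_refine hn ε hε f c e W₁ W₂ hW
    have b := energy_le h0 h1 (fun x => (c x, decide (x ∈ W₁), decide (x ∈ W₂)))
    have : 0 < ε ^ 2 * (n : ℝ) ^ 2 := by positivity
    simp at hc
    linarith
  | succ j ih =>
    intro κ _ c hc
    by_cases hgood : ∀ e (W₁ W₂ : Finset (Fin n)), ∑ x ∈ W₁, ∑ y ∈ W₂,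
          (bavg (pcol c) (f e) (pcol c (x, y)) - f e (x, y)) ≤ ε * (n : ℝ) ^ 2
    · exact ⟨κ, inferInstance, c, Nat.le_mul_of_pos_left _ (by positivity), hgood⟩
    push Not at hgood
    obtain ⟨e, W₁, W₂, hW⟩ := hgood
    have a := energy_refine hn ε hε f c e W₁ W₂ hW
    obtain ⟨κ', i, c', h1, h2⟩ := ih _ (fun x => (c x, decide (x ∈ W₁), decide (x ∈ W₂))) (by
      push_cast at hc; linarith)
    refine ⟨κ', i, c', h1.trans (le_of_eq ?_), h2⟩
    simp [Fintype.card_prod]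
    ring

lemma cut_fun {n : ℕ} (D : Fin n → Fin n → ℝ) (r : ℝ)
    (hD : ∀ W₁ W₂ : Finset (Fin n), ∑ x ∈ W₁, ∑ y ∈ W₂, D x y ≤ r) (a b : Fin n → ℝ)
    (ha : ∀ x, 0 ≤ a x ∧ a x ≤ 1) (hb : ∀ x, 0 ≤ b x ∧ b x ≤ 1) :
    ∑ x, ∑ y, a x * b y * D x y ≤ r := by
  have gen : ∀ (u a : Fin n → ℝ), (∀ x, 0 ≤ a x ∧ a x ≤ 1) →
      ∑ x, a x * u x ≤ ∑ x ∈ univ.filter (fun x => 0 < u x), u x := by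
    intro u a ha
    rw [sum_filter]
    refine sum_le_sum fun x _ => ?_
    split_ifs with h
    · exact mul_le_of_le_one_left h.le (ha x).2
    · exact mul_nonpos_of_nonneg_of_nonpos (ha x).1 (not_lt.1 h)
  have h1 : ∑ x, ∑ y, a x * b y * D x y = ∑ x, a x * ∑ y, b y * D x y := by
    refine sum_congr rfl fun x _ => ?_
    rw [mul_sum]
    exact sum_congr rfl fun y _ => by ring
  rw [h1]
  refine (gen _ a ha).trans ?_
  set W₁ := univ.filter fun x => 0 < ∑ y, b y * D x y
  rw [sum_comm]
  have h2 : ∑ y, ∑ x ∈ W₁, b y * D x y = ∑ y, b y * ∑ x ∈ W₁, D x y := by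
    simp only [mul_sum]
  rw [h2]
  refine (gen _ b hb).trans ?_
  rw [sum_comm]
  exact hD _ _

lemma sum_update {h n : ℕ} (i : Fin h) (Φ : (Fin h → Fin n) → ℝ) :
    ∑ ψ : Fin h → Fin n, ∑ x, Φ (Function.update ψ i x) = n * ∑ ψ, Φ ψ := by
  have h1 : ∑ ψ : Fin h → Fin n, ∑ x, Φ (Function.update ψ i x) =
      ∑ p : (Fin h → Fin n) × Fin n, Φ (Function.update p.1 i p.2) := by
    rw [Fintype.sum_prod_type]
  have h2 : (n : ℝ) * ∑ ψ, Φ ψ = ∑ p : (Fin h → Fin n) × Fin n, Φ p.1 := by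
    rw [Fintype.sum_prod_type]
    simp [mul_sum]
  rw [h1, h2]
  refine sum_bij' (fun p _ => (Function.update p.1 i p.2, p.1 i))
    (fun p _ => (Function.update p.1 i p.2, p.1 i)) ?_ ?_ ?_ ?_ ?_ <;> simp

lemma sum_update₂ {h n : ℕ} (i j : Fin h) (Φ : (Fin h → Fin n) → ℝ) :
    ∑ ψ : Fin h → Fin n, ∑ x, ∑ y, Φ (Function.update (Function.update ψ i x) j y) =
      (n : ℝ) ^ 2 * ∑ ψ, Φ ψ := by
  have := sum_update i (fun ψ : Fin h → Fin n => ∑ y, Φ (Function.update ψ j y))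
  rw [this, sum_update]; ring

lemma single_edge {h n : ℕ} (hn : 0 < n) {E : Type} [Fintype E] (a b : E → Fin h)
    (hab : ∀ e, a e < b e) (hinj : ∀ e f, a e = a f → b e = b f → e = f)
    (e : E) (D : Fin n → Fin n → ℝ) (r : ℝ)
    (hD : ∀ W₁ W₂ : Finset (Fin n), ∑ x ∈ W₁, ∑ y ∈ W₂, D x y ≤ r * (n : ℝ) ^ 2)
    (M : E → Fin n → Fin n → ℝ) (h0 : ∀ e x y, 0 ≤ M e x y) (h1 : ∀ e x y, M e x y ≤ 1) :
    ∑ ψ : Fin h → Fin n, D (ψ (a e)) (ψ (b e)) *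
      ∏ f ∈ univ.erase e, M f (ψ (a f)) (ψ (b f)) ≤ r * (n : ℝ) ^ h := by
  have hn2 : (0 : ℝ) < (n : ℝ) ^ 2 := by positivity
  refine le_of_mul_le_mul_left ?_ hn2
  rw [← sum_update₂ (a e) (b e)]
  have hne : a e ≠ b e := (hab e).ne
  have key : ∀ ψ : Fin h → Fin n, ∑ x, ∑ y,
      (D (Function.update (Function.update ψ (a e) x) (b e) y (a e))
        (Function.update (Function.update ψ (a e) x) (b e) y (b e)) *
      ∏ f ∈ univ.erase e, M f (Function.update (Function.update ψ (a e) x) (b e) y (a f))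
        (Function.update (Function.update ψ (a e) x) (b e) y (b f))) ≤ r * (n : ℝ) ^ 2 := by
    intro ψ
    have hprod : ∀ (s : Finset E) (φ : Fin h → Fin n),
        0 ≤ ∏ f ∈ s, M f (φ (a f)) (φ (b f)) ∧ ∏ f ∈ s, M f (φ (a f)) (φ (b f)) ≤ 1 := by
      intro s φ
      exact ⟨prod_nonneg fun f _ => h0 _ _ _, prod_le_one (fun f _ => h0 _ _ _) fun f _ => h1 _ _ _⟩
    refine le_trans (le_of_eq ?_) (cut_fun D _ hD
      (fun x => ∏ f ∈ (univ.erase e).filter (fun f => a f ≠ b e ∧ b f ≠ b e),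
        M f (Function.update ψ (a e) x (a f)) (Function.update ψ (a e) x (b f)))
      (fun y => ∏ f ∈ (univ.erase e).filter (fun f => ¬ (a f ≠ b e ∧ b f ≠ b e)),
        M f (Function.update ψ (b e) y (a f)) (Function.update ψ (b e) y (b f)))
      (fun x => hprod _ _) (fun y => hprod _ _))
    refine sum_congr rfl fun x _ => sum_congr rfl fun y _ => ?_
    rw [← prod_filter_mul_prod_filter_not (univ.erase e) (fun f => a f ≠ b e ∧ b f ≠ b e)]
    have e1 : Function.update (Function.update ψ (a e) x) (b e) y (a e) = x := by
      simp [Function.update_of_ne hne]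
    have e2 : Function.update (Function.update ψ (a e) x) (b e) y (b e) = y := by simp
    rw [e1, e2, mul_comm]
    congr 1
    congr 1
    · refine prod_congr rfl fun f hf => ?_
      simp only [mem_filter] at hf
      rw [Function.update_of_ne hf.2.1, Function.update_of_ne hf.2.2]
    · refine prod_congr rfl fun f hf => ?_
      simp only [mem_filter, mem_erase, mem_univ, and_true, not_and_or, not_not] at hf
      have ha : a f ≠ a e := by
        intro h
        rcases hf.2 with h' | h'
        · exact hne (h.symm.trans h')
        · exact hf.1 (hinj _ _ h h')
      have hb : b f ≠ a e := by
        intro h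
        have h3 := hab f
        have h4 := hab e
        rcases hf.2 with h' | h'
        · rw [h, h'] at h3
          exact absurd h3 (not_lt.2 h4.le)
        · exact hne (h.symm.trans h')
      rw [Function.update_comm hne, Function.update_of_ne ha, Function.update_of_ne hb]
  refine (sum_le_card_nsmul _ _ _ fun ψ _ => key ψ).trans (le_of_eq ?_)
  simp
  ring

lemma counting {h n : ℕ} (hn : 0 < n) {E : Type} [Fintype E] (a b : E → Fin h)
    (hab : ∀ e, a e < b e) (hinj : ∀ e f, a e = a f → b e = b f → e = f)
    (F G : E → Fin n → Fin n → ℝ) (r : ℝ)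
    (hD : ∀ e, ∀ W₁ W₂ : Finset (Fin n),
      ∑ x ∈ W₁, ∑ y ∈ W₂, (G e x y - F e x y) ≤ r * (n : ℝ) ^ 2)
    (hF0 : ∀ e x y, 0 ≤ F e x y) (hF1 : ∀ e x y, F e x y ≤ 1)
    (hG0 : ∀ e x y, 0 ≤ G e x y) (hG1 : ∀ e x y, G e x y ≤ 1) :
    ∑ ψ : Fin h → Fin n, ∏ e, G e (ψ (a e)) (ψ (b e)) ≤
      (∑ ψ : Fin h → Fin n, ∏ e, F e (ψ (a e)) (ψ (b e))) +
        Fintype.card E * (r * (n : ℝ) ^ h) := by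
  have key : ∀ s : Finset E, ∑ ψ : Fin h → Fin n, ∏ e, G e (ψ (a e)) (ψ (b e)) ≤
      (∑ ψ : Fin h → Fin n, ∏ e, (if e ∈ s then F e else G e) (ψ (a e)) (ψ (b e))) +
        s.card * (r * (n : ℝ) ^ h) := by
    intro s
    induction s using Finset.induction_on with
    | empty => simp
    | insert e s hes ih =>
      refine ih.trans ?_
      have := single_edge hn a b hab hinj e (fun x y => G e x y - F e x y) r (hD e)
        (fun f => if f ∈ s then F f else G f)
        (fun f x y => by split_ifs; exacts [hF0 _ _ _, hG0 _ _ _])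
        (fun f x y => by split_ifs; exacts [hF1 _ _ _, hG1 _ _ _])
      have h2 : ∑ ψ : Fin h → Fin n, (G e (ψ (a e)) (ψ (b e)) - F e (ψ (a e)) (ψ (b e))) *
          ∏ f ∈ univ.erase e, (if f ∈ s then F f else G f) (ψ (a f)) (ψ (b f)) =
          (∑ ψ : Fin h → Fin n, ∏ f, (if f ∈ s then F f else G f) (ψ (a f)) (ψ (b f))) -
          ∑ ψ : Fin h → Fin n, ∏ f, (if f ∈ insert e s then F f else G f) (ψ (a f)) (ψ (b f)) := by
        rw [← sum_sub_distrib]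
        refine sum_congr rfl fun ψ _ => ?_
        rw [← mul_prod_erase univ _ (mem_univ e), ← mul_prod_erase univ
          (fun f => (if f ∈ insert e s then F f else G f) (ψ (a f)) (ψ (b f))) (mem_univ e)]
        have : ∏ f ∈ univ.erase e, (if f ∈ insert e s then F f else G f) (ψ (a f)) (ψ (b f)) =
          ∏ f ∈ univ.erase e, (if f ∈ s then F f else G f) (ψ (a f)) (ψ (b f)) := by
          refine prod_congr rfl fun f hf => ?_
          have hfe : f ≠ e := (mem_erase.1 hf).1
          simp [mem_insert, hfe]
        rw [this]
        simp only [hes, if_false, mem_insert_self, if_true]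
        ring
      rw [h2] at this
      rw [card_insert_of_notMem hes]
      push_cast
      linarith
  have := key univ
  simpa using this

lemma dense_lemma {h k : ℕ} (hk : 0 < k) (α : ℝ) (hα : 0 < α) : ∃ Q : ℕ, 0 < Q ∧
    ∀ {E : Type} [Fintype E], Fintype.card E = k → ∀ (a b : E → Fin h),
    (∀ e, a e < b e) → (∀ e f, a e = a f → b e = b f → e = f) →
    ∀ n : ℕ, 0 < n → ∀ C : E → Finset (Fin n × Fin n),
    ((univ.filter fun ψ : Fin h → Fin n => ∀ e, (ψ (a e), ψ (b e)) ∈ C e).card : ℝ) <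
      α ^ k / 4 * (n : ℝ) ^ h →
    ∃ (κ : Type) (_ : Fintype κ) (c : Fin n → κ) (e : E) (P : κ × κ → Prop),
      Fintype.card κ ≤ Q ∧
      (n : ℝ) ^ 2 / (2 * k) ≤ ((univ.filter fun z : Fin n × Fin n => P (pcol c z)).card : ℝ) ∧
      (((C e).filter fun z => P (pcol c z)).card : ℝ) ≤ α * (n : ℝ) ^ 2 := by
  set ε : ℝ := α ^ k / (4 * k) with hε
  have hk' : (0 : ℝ) < k := by exact_mod_cast hk
  have hε0 : 0 < ε := by positivity
  refine ⟨4 ^ ⌈(k : ℝ) / ε ^ 2⌉₊, by positivity, ?_⟩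
  intro E _ hE a b hab hinj n hn C hC
  have hn' : (0 : ℝ) < n := by exact_mod_cast hn
  set f : E → Fin n × Fin n → ℝ := fun e z => if z ∈ C e then 1 else 0 with hf
  have hf0 : ∀ e z, 0 ≤ f e z := fun e z => by simp only [hf]; split_ifs <;> simp
  have hf1 : ∀ e z, f e z ≤ 1 := fun e z => by simp only [hf]; split_ifs <;> simp
  obtain ⟨κ, iκ, c, hcard, hreg⟩ := weak_reg hn ε hε0 f hf0 hf1 ⌈(k : ℝ) / ε ^ 2⌉₊ Unit
    (fun _ => ()) (by
      have h1 : 0 ≤ energy f (fun _ : Fin n => ()) := by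
        unfold energy
        positivity
      have h2 := Nat.le_ceil ((k : ℝ) / ε ^ 2)
      rw [div_le_iff₀ (by positivity)] at h2
      rw [hE]
      have : (k : ℝ) * (n : ℝ) ^ 2 ≤ ⌈(k : ℝ) / ε ^ 2⌉₊ * ε ^ 2 * (n : ℝ) ^ 2 := by gcongr
      linarith)
  set P : E → κ × κ → Prop := fun e q => bavg (pcol c) (f e) q < α with hP
  refine ⟨κ, iκ, c, ?_⟩
  have hsmall : ∀ e, (((C e).filter fun z => P e (pcol c z)).card : ℝ) ≤ α * (n : ℝ) ^ 2 := by
    intro e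
    have h1 := bavg_inner (pcol c) (f e) (fun q => if P e q then 1 else 0)
    have h2 : ∑ z, f e z * (if P e (pcol c z) then 1 else 0) =
        (((C e).filter fun z => P e (pcol c z)).card : ℝ) := by
      simp only [hf, mul_ite, mul_one, mul_zero]
      rw [← sum_filter, ← sum_filter, filter_filter]
      rw [sum_const, nsmul_eq_mul, mul_one]
      congr 2
      ext z; simp [and_comm]
    rw [← h2, ← h1]
    refine (sum_le_card_nsmul _ _ α fun z _ => ?_).trans ?_
    · split_ifs with h
      · rw [mul_one]; exact h.le
      · rw [mul_zero]; exact hα.le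
    · simp [sq]; linarith
  by_contra hcon
  push Not at hcon
  have hZ : ∀ e, ((univ.filter fun z : Fin n × Fin n => P e (pcol c z)).card : ℝ) <
      (n : ℝ) ^ 2 / (2 * k) := by
    intro e
    by_contra h
    push Not at h
    exact absurd (hsmall e) (not_le.2 (hcon e (P e) (by simpa using hcard) h))
  -- count of bad maps
  have hbad : ∀ e, ((univ.filter fun ψ : Fin h → Fin n =>
      P e (pcol c (ψ (a e), ψ (b e)))).card : ℝ) ≤ (n : ℝ) ^ h / (2 * k) := by
    intro e
    have hne : a e ≠ b e := (hab e).ne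
    have h1 := sum_update₂ (a e) (b e) (fun ψ : Fin h → Fin n =>
      if P e (pcol c (ψ (a e), ψ (b e))) then (1 : ℝ) else 0)
    simp only [Function.update_self, Function.update_of_ne hne] at h1
    have h2 : ∑ x, ∑ y, (if P e (pcol c (x, y)) then (1 : ℝ) else 0) =
        ((univ.filter fun z : Fin n × Fin n => P e (pcol c z)).card : ℝ) := by
      rw [← Fintype.sum_prod_type' (f := fun x y => (if P e (pcol c (x, y)) then (1 : ℝ) else 0))]
      simp
    rw [h2] at h1
    simp only [sum_const, card_univ, nsmul_eq_mul, sum_boole] at h1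
    simp only [Fintype.card_pi, prod_const, card_univ, Fintype.card_fin, Nat.cast_pow] at h1
    have hn2 : (0 : ℝ) < (n : ℝ) ^ 2 := by positivity
    refine le_of_mul_le_mul_left ?_ hn2
    rw [← h1]
    calc _ ≤ (n : ℝ) ^ h * ((n : ℝ) ^ 2 / (2 * k)) := by gcongr; exact (hZ e).le
      _ = _ := by ring
  set G : E → Fin n → Fin n → ℝ := fun e x y => bavg (pcol c) (f e) (pcol c (x, y)) with hG
  have hcount := counting hn a b hab hinj (fun e x y => f e (x, y)) G ε hreg
    (fun e x y => hf0 _ _) (fun e x y => hf1 _ _)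
    (fun e x y => bavg_nonneg _ (hf0 e) _) (fun e x y => bavg_le_one _ (hf1 e) _)
  have hFc : ∑ ψ : Fin h → Fin n, ∏ e, f e (ψ (a e), ψ (b e)) =
      ((univ.filter fun ψ : Fin h → Fin n => ∀ e, (ψ (a e), ψ (b e)) ∈ C e).card : ℝ) := by
    rw [card_filter]
    push_cast
    refine sum_congr rfl fun ψ _ => ?_
    simp only [hf]
    rw [prod_boole]
    simp
  rw [hFc, hE] at hcount
  -- lower bound
  set bad := univ.filter fun ψ : Fin h → Fin n => ∃ e, P e (pcol c (ψ (a e), ψ (b e))) with hbadd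
  have hbadc : (bad.card : ℝ) ≤ (n : ℝ) ^ h / 2 := by
    have h1 : bad ⊆ univ.biUnion fun e => univ.filter fun ψ : Fin h → Fin n =>
        P e (pcol c (ψ (a e), ψ (b e))) := by
      intro ψ hψ
      simpa [hbadd] using hψ
    have h2 : (bad.card : ℝ) ≤ ∑ e, ((univ.filter fun ψ : Fin h → Fin n =>
        P e (pcol c (ψ (a e), ψ (b e)))).card : ℝ) := by
      exact_mod_cast (card_le_card h1).trans card_biUnion_le
    refine (h2.trans (sum_le_card_nsmul _ _ _ fun e _ => hbad e)).trans (le_of_eq ?_)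
    rw [card_univ, hE, nsmul_eq_mul]
    field_simp
  have hgoodc : (n : ℝ) ^ h / 2 ≤ ((badᶜ).card : ℝ) := by
    rw [card_compl, Nat.cast_sub (card_le_univ _)]
    simp only [Fintype.card_pi, prod_const, card_univ, Fintype.card_fin, Nat.cast_pow]
    linarith
  have hlow : (n : ℝ) ^ h / 2 * α ^ k ≤ ∑ ψ : Fin h → Fin n, ∏ e, G e (ψ (a e)) (ψ (b e)) := by
    calc (n : ℝ) ^ h / 2 * α ^ k ≤ (badᶜ).card * α ^ k := by gcongr
      _ = ∑ ψ ∈ badᶜ, α ^ k := by simp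
      _ ≤ ∑ ψ ∈ badᶜ, ∏ e, G e (ψ (a e)) (ψ (b e)) := by
          refine sum_le_sum fun ψ hψ => ?_
          simp only [hbadd, mem_compl, mem_filter, mem_univ, true_and, not_exists, hP, not_lt] at hψ
          rw [← hE, ← card_univ, ← prod_const]
          exact prod_le_prod (fun _ _ => hα.le) fun e _ => hψ e
      _ ≤ _ := by
          refine sum_le_sum_of_subset_of_nonneg (subset_univ _) fun ψ _ _ => ?_
          exact prod_nonneg fun e _ => bavg_nonneg _ (hf0 e) _
  have : (k : ℝ) * (ε * (n : ℝ) ^ h) = α ^ k / 4 * (n : ℝ) ^ h := by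
    rw [hε]; field_simp
  rw [this] at hcount
  linarith

end KLR


namespace KLR
open Finset

lemma descFactorial_ratio (y N s : ℕ) (ρ : ℝ) (h0 : 0 ≤ ρ) (h1 : ρ ≤ 1) (hy : (y : ℝ) ≤ ρ * N) :
    (y.descFactorial s : ℝ) ≤ ρ ^ s * N.descFactorial s := by
  induction s with
  | zero => simp
  | succ s ih =>
    rw [Nat.descFactorial_succ, Nat.descFactorial_succ, pow_succ]
    push_cast
    have h2 : ((y - s : ℕ) : ℝ) ≤ ρ * ((N - s : ℕ) : ℝ) := by
      by_cases hys : y ≤ s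
      · rw [Nat.sub_eq_zero_of_le hys]
        push_cast
        positivity
      · push Not at hys
        have hyN : (y : ℝ) ≤ N := hy.trans (mul_le_of_le_one_left (Nat.cast_nonneg _) h1)
        have hyN' : y ≤ N := by exact_mod_cast hyN
        rw [Nat.cast_sub hys.le, Nat.cast_sub (hys.le.trans hyN')]
        nlinarith [(Nat.cast_nonneg s : (0:ℝ) ≤ s)]
    calc ((y - s : ℕ) : ℝ) * y.descFactorial s ≤
        (ρ * ((N - s : ℕ) : ℝ)) * (ρ ^ s * N.descFactorial s) := by gcongr
      _ = _ := by ring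

lemma choose_ratio (y N s : ℕ) (ρ : ℝ) (h0 : 0 ≤ ρ) (h1 : ρ ≤ 1) (hy : (y : ℝ) ≤ ρ * N) :
    (y.choose s : ℝ) ≤ ρ ^ s * N.choose s := by
  have := descFactorial_ratio y N s ρ h0 h1 hy
  rw [Nat.descFactorial_eq_factorial_mul_choose, Nat.descFactorial_eq_factorial_mul_choose] at this
  push_cast at this
  have hs : (0 : ℝ) < s.factorial := by exact_mod_cast s.factorial_pos
  refine le_of_mul_le_mul_left ?_ hs
  linarith

/-- supersets of size `m` -/
noncomputable def sups {V : Type} [Fintype V] (m : ℕ) (T : Finset V) : Finset (Finset V) :=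
  univ.filter fun X => T ⊆ X ∧ X.card = m

lemma card_sups {V : Type} [Fintype V] (m : ℕ) (T : Finset V) (hT : T.card ≤ m) :
    (sups m T).card = (Fintype.card V - T.card).choose (m - T.card) := by
  rw [← card_compl, ← card_powersetCard]
  refine card_bij' (fun X _ => X \ T) (fun R _ => R ∪ T) ?_ ?_ ?_ ?_
  · intro X hX
    simp only [sups, mem_filter, mem_univ, true_and] at hX
    rw [mem_powersetCard]
    refine ⟨?_, by rw [card_sdiff_of_subset hX.1, hX.2]⟩
    intro x hx
    simp at hx ⊢
    exact hx.2
  · intro R hR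
    rw [mem_powersetCard] at hR
    simp only [sups, mem_filter, mem_univ, true_and]
    refine ⟨subset_union_right, ?_⟩
    rw [card_union_of_disjoint, hR.2]
    · omega
    · rw [disjoint_left]
      intro x hx hx'
      have := hR.1 hx
      simp at this
      exact this hx'
  · intro X hX
    simp only [sups, mem_filter, mem_univ, true_and] at hX
    exact sdiff_union_of_subset hX.1
  · intro R hR
    rw [mem_powersetCard] at hR
    ext x
    simp only [mem_sdiff, mem_union]
    constructor
    · rintro ⟨h | h, h'⟩
      · exact h
      · exact absurd h h'
    · intro h
      have := hR.1 h
      simp at this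
      exact ⟨Or.inl h, this⟩

lemma tail_bound {V : Type} [Fintype V] (m s : ℕ) (T Y : Finset V) (ρ : ℝ) (h0 : 0 ≤ ρ)
    (h1 : ρ ≤ 1) (hY : (Y.card : ℝ) ≤ ρ * ((Fintype.card V - T.card : ℕ) : ℝ)) :
    (((sups m T).filter fun X => T.card + s ≤ (X ∩ Y).card).card : ℝ) ≤
      2 ^ m * ρ ^ s * (sups m T).card := by
  by_cases hts : T.card + s ≤ m
  swap
  · have : ((sups m T).filter fun X => T.card + s ≤ (X ∩ Y).card) = ∅ := by
      rw [filter_eq_empty_iff]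
      intro X hX h
      simp only [sups, mem_filter, mem_univ, true_and] at hX
      have := card_le_card (inter_subset_left : X ∩ Y ⊆ X)
      omega
    rw [this]
    simp
    positivity
  have hsub : ((sups m T).filter fun X => T.card + s ≤ (X ∩ Y).card) ⊆
      (powersetCard s (Y \ T)).biUnion fun R => sups m (T ∪ R) := by
    intro X hX
    simp only [sups, mem_filter, mem_univ, true_and] at hX
    obtain ⟨⟨hTX, hXm⟩, hc⟩ := hX
    have h2 : s ≤ ((X ∩ Y) \ T).card := by
      have := le_card_sdiff T (X ∩ Y)
      omega
    obtain ⟨R, hR, hRs⟩ := exists_subset_card_eq h2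
    rw [mem_biUnion]
    refine ⟨R, ?_, ?_⟩
    · rw [mem_powersetCard]
      refine ⟨hR.trans (sdiff_subset_sdiff inter_subset_right le_rfl), hRs⟩
    · simp only [sups, mem_filter, mem_univ, true_and]
      exact ⟨union_subset hTX (hR.trans (sdiff_subset.trans inter_subset_left)), hXm⟩
  have hcard : ((sups m T).filter fun X => T.card + s ≤ (X ∩ Y).card).card ≤
      (Y.card).choose s * ((Fintype.card V - T.card - s).choose (m - T.card - s)) := by
    refine (card_le_card hsub).trans (card_biUnion_le.trans ?_)
    have : ∀ R ∈ powersetCard s (Y \ T), (sups m (T ∪ R)).card =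
        (Fintype.card V - T.card - s).choose (m - T.card - s) := by
      intro R hR
      rw [mem_powersetCard] at hR
      have hd : (T ∪ R).card = T.card + s := by
        rw [card_union_of_disjoint, hR.2]
        rw [disjoint_left]
        intro x hx hx'
        exact (mem_sdiff.1 (hR.1 hx')).2 hx
      rw [card_sups _ _ (by omega), hd, Nat.sub_sub, Nat.sub_sub]
    rw [sum_congr rfl this, sum_const, card_powersetCard, smul_eq_mul]
    gcongr
    exact sdiff_subset
  set N' := Fintype.card V - T.card with hN'
  set m' := m - T.card with hm'
  have hr := choose_ratio Y.card N' s ρ h0 h1 hY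
  have hmul : N'.choose m' * m'.choose s = N'.choose s * (N' - s).choose (m' - s) :=
    Nat.choose_mul (by omega)
  have h2m : m'.choose s ≤ 2 ^ m := (Nat.choose_le_two_pow _ _).trans
    (Nat.pow_le_pow_right (by norm_num) (by omega))
  rw [card_sups m T (by omega)]
  calc (((sups m T).filter fun X => T.card + s ≤ (X ∩ Y).card).card : ℝ)
      ≤ (Y.card).choose s * ((N' - s).choose (m' - s)) := by exact_mod_cast hcard
    _ ≤ (ρ ^ s * N'.choose s) * ((N' - s).choose (m' - s)) := by gcongr
    _ = ρ ^ s * ((N'.choose s * (N' - s).choose (m' - s) : ℕ) : ℝ) := by push_cast; ring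
    _ = ρ ^ s * ((N'.choose m' * m'.choose s : ℕ) : ℝ) := by rw [hmul]
    _ ≤ ρ ^ s * ((N'.choose m' * 2 ^ m : ℕ) : ℝ) := by gcongr
    _ = _ := by push_cast; ring

lemma sum_sups {V : Type} [Fintype V] (m : ℕ) :
    ∑ T : Finset V, (sups m T).card = (Fintype.card V).choose m * 2 ^ m := by
  have : ∑ T : Finset V, (sups m T).card = ∑ X ∈ powersetCard m (univ : Finset V), 2 ^ m := by
    have h7 : ∀ T : Finset V, (sups m T).card =
        ∑ X ∈ powersetCard m (univ : Finset V), if T ⊆ X then 1 else 0 := by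
      intro T
      rw [← card_filter]
      congr 1
      ext X
      simp [sups, mem_powersetCard, and_comm]
    rw [sum_congr rfl fun T _ => h7 T]
    rw [sum_comm]
    refine sum_congr rfl fun X hX => ?_
    rw [mem_powersetCard] at hX
    rw [← card_filter, ← hX.2, ← card_powerset]
    congr 1
    ext T; simp
  rw [this, sum_const, card_powersetCard, card_univ, smul_eq_mul]

lemma sum_sups_pow {E V : Type} [Fintype E] [Fintype V] (m : ℕ) :
    ∑ T : E → Finset V, ∏ f, (sups m (T f)).card =
      ((Fintype.card V).choose m) ^ (Fintype.card E) * (2 ^ m) ^ (Fintype.card E) := by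
  have h6 := (Finset.prod_univ_sum (fun _ : E => (univ : Finset (Finset V)))
    (fun _ T => (sups m T).card))
  rw [prod_const, card_univ, sum_sups, mul_pow] at h6
  rw [h6]
  refine sum_congr ?_ fun _ _ => rfl
  ext T
  simp

lemma prod_le_of_eq_off {E : Type} [Fintype E] (u v : E → ℝ) (e : E) (c : ℝ)
    (hv : ∀ f, 0 ≤ v f) (huv : ∀ f, f ≠ e → u f = v f) (he : u e ≤ c * v e) :
    ∏ f, u f ≤ c * ∏ f, v f := by
  rw [← mul_prod_erase univ u (mem_univ e), ← mul_prod_erase univ v (mem_univ e),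
    prod_congr rfl fun f hf => huv f (mem_erase.1 hf).1, ← mul_assoc]
  exact mul_le_mul_of_nonneg_right he (prod_nonneg fun f _ => hv f)

lemma fib_card {E V : Type} [Fintype E] [Fintype V] (m s : ℕ) (ρ : ℝ) (h0 : 0 ≤ ρ)
    (h1 : ρ ≤ 1) (e : E) (T : E → Finset V) (Y : Finset V)
    (hY : (Y.card : ℝ) ≤ ρ * ((Fintype.card V - (T e).card : ℕ) : ℝ))
    (F : Finset (E → Finset V)) (hF : ∀ X ∈ F, (∀ f, X f ∈ sups m (T f)) ∧
      (T e).card + s ≤ (X e ∩ Y).card) :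
    (F.card : ℝ) ≤ 2 ^ m * ρ ^ s * ∏ f, ((sups m (T f)).card : ℝ) := by
  have htail := tail_bound m s (T e) Y ρ h0 h1 hY
  let u : E → Finset (Finset V) := fun f =>
    if f = e then (sups m (T e)).filter fun X => (T e).card + s ≤ (X ∩ Y).card
        else sups m (T f)
  have hue : u e = (sups m (T e)).filter fun X => (T e).card + s ≤ (X ∩ Y).card := if_pos rfl
  have huf : ∀ f, f ≠ e → u f = sups m (T f) := fun f hf => if_neg hf
  clear_value u
  have hsub2 : F ⊆ Fintype.piFinset u := by
    intro X hX
    rw [Fintype.mem_piFinset]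
    intro f
    by_cases hf : f = e
    · subst hf
      rw [hue, mem_filter]; exact ⟨(hF X hX).1 _, (hF X hX).2⟩
    · rw [huf f hf]
      exact (hF X hX).1 f
  have h3 : (F.card : ℝ) ≤ ∏ f, ((u f).card : ℝ) := by
    have := card_le_card hsub2
    rw [Fintype.card_piFinset] at this
    exact_mod_cast this
  refine h3.trans ?_
  refine prod_le_of_eq_off _ _ e _ (fun f => Nat.cast_nonneg _) (fun f hf => ?_) ?_
  · rw [huf f hf]
  · rw [hue]
    exact htail

lemma family_count {E V : Type} [Fintype E] [Fintype V] (m s : ℕ) (ρ : ℝ) (h0 : 0 ≤ ρ)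
    (h1 : ρ ≤ 1) (et : (E → Finset V) → E) (Y : (E → Finset V) → Finset V)
    (𝒳 : Finset (E → Finset V))
    (h𝒳 : ∀ X ∈ 𝒳, (∀ f, (X f).card = m) ∧ ∃ T : E → Finset V, (∀ f, T f ⊆ X f) ∧
      (T (et T)).card + s ≤ (X (et T) ∩ Y T).card ∧
      ((Y T).card : ℝ) ≤ ρ * ((Fintype.card V - (T (et T)).card : ℕ) : ℝ)) :
    (𝒳.card : ℝ) ≤ (2 ^ m) ^ (Fintype.card E + 1) * ρ ^ s *
      ((Fintype.card V).choose m : ℝ) ^ (Fintype.card E) := by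
  let Pr : (E → Finset V) → (E → Finset V) → Prop := fun T X =>
    (∀ f, X f ∈ sups m (T f)) ∧ (T (et T)).card + s ≤ (X (et T) ∩ Y T).card ∧
      ((Y T).card : ℝ) ≤ ρ * ((Fintype.card V - (T (et T)).card : ℕ) : ℝ)
  have hPr : ∀ T X, Pr T X ↔ ((∀ f, X f ∈ sups m (T f)) ∧
      (T (et T)).card + s ≤ (X (et T) ∩ Y T).card ∧
      ((Y T).card : ℝ) ≤ ρ * ((Fintype.card V - (T (et T)).card : ℕ) : ℝ)) := fun _ _ => Iff.rfl
  clear_value Pr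
  have hsub : 𝒳 ⊆ (univ : Finset (E → Finset V)).biUnion fun T => 𝒳.filter (Pr T) := by
    intro X hX
    obtain ⟨hm, T, hT, hc, hY⟩ := h𝒳 X hX
    rw [mem_biUnion]
    refine ⟨T, mem_univ _, ?_⟩
    rw [mem_filter, hPr]
    refine ⟨hX, fun f => ?_, hc, hY⟩
    simp only [sups, mem_filter, mem_univ, true_and]
    exact ⟨hT f, hm f⟩
  have hfibc : ∀ T, ((𝒳.filter (Pr T)).card : ℝ) ≤
      2 ^ m * ρ ^ s * ∏ f, ((sups m (T f)).card : ℝ) := by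
    intro T
    by_cases hY : ((Y T).card : ℝ) ≤ ρ * ((Fintype.card V - (T (et T)).card : ℕ) : ℝ)
    · refine fib_card m s ρ h0 h1 (et T) T (Y T) hY _ fun X hX => ?_
      have h9 := (hPr T X).1 (mem_filter.1 hX).2
      exact ⟨h9.1, h9.2.1⟩
    · have : 𝒳.filter (Pr T) = ∅ := by
        rw [filter_eq_empty_iff]
        intro X _ hP
        exact hY ((hPr T X).1 hP).2.2
      rw [this, card_empty, Nat.cast_zero]
      exact mul_nonneg (mul_nonneg (pow_nonneg zero_le_two _) (pow_nonneg h0 _))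
        (prod_nonneg fun _ _ => Nat.cast_nonneg _)
  have hdc := sum_sups_pow (E := E) (V := V) m
  have h8 : (𝒳.card : ℝ) ≤ ∑ T, ((𝒳.filter (Pr T)).card : ℝ) := by
    exact_mod_cast (card_le_card hsub).trans card_biUnion_le
  have h9 : (∑ T : E → Finset V, ∏ f, ((sups m (T f)).card : ℝ)) =
      ((Fintype.card V).choose m : ℝ) ^ (Fintype.card E) * (2 ^ m) ^ (Fintype.card E) := by
    exact_mod_cast hdc
  refine (h8.trans (sum_le_sum fun T _ => hfibc T)).trans ?_
  rw [← mul_sum, h9]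
  apply le_of_eq
  ring

end KLR

namespace KLR
open Finset

/-- The edges of `H`, oriented upwards. -/
abbrev HE {h : ℕ} (H : SimpleGraph (Fin h)) : Type :=
  {e : Fin h × Fin h // e.1 < e.2 ∧ H.Adj e.1 e.2}

lemma HE_ext {h : ℕ} {H : SimpleGraph (Fin h)} (e f : HE H) (h1 : e.1.1 = f.1.1)
    (h2 : e.1.2 = f.1.2) : e = f := Subtype.ext (Prod.ext h1 h2)

lemma HE_sym_inj {h : ℕ} {H : SimpleGraph (Fin h)} (e f : HE H)
    (hef : s(e.1.1, e.1.2) = s(f.1.1, f.1.2)) : e = f := by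
  rw [Sym2.eq_iff] at hef
  rcases hef with ⟨h1, h2⟩ | ⟨h1, h2⟩
  · exact HE_ext e f h1 h2
  · have h3 := e.2.1
    have h4 := f.2.1
    rw [h1, h2] at h3
    exact absurd h3 (not_lt.2 h4.le)

lemma card_HE {h : ℕ} (H : SimpleGraph (Fin h)) :
    Nat.card H.edgeSet = Fintype.card (HE H) := by
  rw [← Nat.card_eq_fintype_card]
  symm
  refine Nat.card_eq_of_bijective
    (fun e : HE H => (⟨s(e.1.1, e.1.2), e.2.2⟩ : H.edgeSet)) ⟨?_, ?_⟩
  · intro e f hef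
    exact HE_sym_inj e f (congrArg Subtype.val hef)
  · rintro ⟨x, hx⟩
    induction x using Sym2.ind with
    | _ x y =>
      have hxy : H.Adj x y := hx
      rcases lt_trichotomy x y with hlt | heq | hgt
      · exact ⟨⟨(x, y), hlt, hxy⟩, rfl⟩
      · exact absurd heq hxy.ne
      · exact ⟨⟨(y, x), hgt, hxy.symm⟩, Subtype.ext Sym2.eq_swap⟩

lemma m2_bdd {h : ℕ} (H : SimpleGraph (Fin h)) : BddAbove {x : ℝ | ∃ s : Finset (Fin h),
    3 ≤ s.card ∧ x = ((Nat.card {e : Sym2 (Fin h) // e ∈ H.edgeSet ∧ ∀ v ∈ e, v ∈ s} : ℝ) - 1) /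
      ((s.card : ℝ) - 2)} := by
  refine (Set.Finite.subset (Set.finite_range fun s : Finset (Fin h) =>
    ((Nat.card {e : Sym2 (Fin h) // e ∈ H.edgeSet ∧ ∀ v ∈ e, v ∈ s} : ℝ) - 1) /
      ((s.card : ℝ) - 2)) ?_).bddAbove
  rintro x ⟨s, _, rfl⟩
  exact ⟨s, rfl⟩

lemma m2_edges {h : ℕ} (H : SimpleGraph (Fin h)) (s : Finset (Fin h)) (hs : 3 ≤ s.card)
    (S : Finset (HE H)) (hS : ∀ e ∈ S, e.1.1 ∈ s ∧ e.1.2 ∈ s) :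
    (S.card : ℝ) - 1 ≤ m2 H * ((s.card : ℝ) - 2) := by
  have hs' : (3 : ℝ) ≤ s.card := by exact_mod_cast hs
  have h1 := le_csSup (m2_bdd H) ⟨s, hs, rfl⟩
  have h2 : S.card ≤ Nat.card {e : Sym2 (Fin h) // e ∈ H.edgeSet ∧ ∀ v ∈ e, v ∈ s} := by
    rw [← Fintype.card_coe, ← Nat.card_eq_fintype_card]
    refine Nat.card_le_card_of_injective (fun e : S => ⟨s(e.1.1.1, e.1.1.2), e.1.2.2, ?_⟩) ?_
    · intro v hv
      rw [Sym2.mem_iff] at hv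
      rcases hv with rfl | rfl
      · exact (hS e.1 e.2).1
      · exact (hS e.1 e.2).2
    · intro e f hef
      exact Subtype.ext (HE_sym_inj _ _ (congrArg Subtype.val hef))
  have h2' : (S.card : ℝ) ≤
    (Nat.card {e : Sym2 (Fin h) // e ∈ H.edgeSet ∧ ∀ v ∈ e, v ∈ s} : ℝ) := by exact_mod_cast h2
  change _ ≤ m2 H at h1
  rw [div_le_iff₀ (by linarith)] at h1
  linarith

/-- vertices touched by a set of edges -/
noncomputable def verts {h : ℕ} {H : SimpleGraph (Fin h)} (S : Finset (HE H)) : Finset (Fin h) :=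
  S.biUnion fun e => {e.1.1, e.1.2}

lemma mem_verts {h : ℕ} {H : SimpleGraph (Fin h)} (S : Finset (HE H)) (e : HE H) (he : e ∈ S) :
    e.1.1 ∈ verts S ∧ e.1.2 ∈ verts S := by
  constructor <;> exact mem_biUnion.2 ⟨e, he, by simp⟩

lemma verts_card {h : ℕ} {H : SimpleGraph (Fin h)} (S : Finset (HE H)) (hS : S.Nonempty) :
    2 ≤ (verts S).card ∧ (S.card = 1 ∨ 3 ≤ (verts S).card) := by
  obtain ⟨e, he⟩ := hS
  have hne : e.1.1 ≠ e.1.2 := e.2.1.ne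
  have hsub : ({e.1.1, e.1.2} : Finset (Fin h)) ⊆ verts S := by
    intro v hv
    rw [mem_insert, mem_singleton] at hv
    rcases hv with rfl | rfl
    · exact (mem_verts S e he).1
    · exact (mem_verts S e he).2
  have h2 : ({e.1.1, e.1.2} : Finset (Fin h)).card = 2 := card_pair hne
  have h2' : 2 ≤ (verts S).card := h2 ▸ card_le_card hsub
  refine ⟨h2', ?_⟩
  by_cases h3 : 3 ≤ (verts S).card
  · exact Or.inr h3
  · left
    have heq := eq_of_subset_of_card_le hsub (by omega)
    rw [card_eq_one]
    refine ⟨e, ?_⟩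
    ext f
    rw [mem_singleton]
    constructor
    · intro hf
      have h4 := mem_verts S f hf
      rw [← heq] at h4
      simp only [mem_insert, mem_singleton] at h4
      have h5 := f.2.1
      have h6 := e.2.1
      rcases h4 with ⟨h7 | h7, h8 | h8⟩
      · rw [h7, h8] at h5; exact absurd h5 (lt_irrefl _)
      · exact HE_ext _ _ h7 h8
      · rw [h7, h8] at h5; exact absurd h5 (not_lt.2 h6.le)
      · rw [h7, h8] at h5; exact absurd h5 (lt_irrefl _)
    · rintro rfl; exact he

lemma m2_range {h : ℕ} (hh : 3 ≤ h) (H : SimpleGraph (Fin h)) : 1 / m2 H ≤ 2 := by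
  by_cases hk : Fintype.card (HE H) ≤ 1
  · have : m2 H ≤ 0 := by
      refine csSup_le ⟨_, univ, by simpa using hh, rfl⟩ ?_
      rintro x ⟨s, hs, rfl⟩
      have h1 : Nat.card {e : Sym2 (Fin h) // e ∈ H.edgeSet ∧ ∀ v ∈ e, v ∈ s} ≤
          Nat.card H.edgeSet :=
        Nat.card_le_card_of_injective (fun e => (⟨e.1, e.2.1⟩ : H.edgeSet))
          fun e f hef => Subtype.ext (congrArg (fun x : H.edgeSet => x.1) hef)
      rw [card_HE] at h1
      have h2 : (Nat.card {e : Sym2 (Fin h) // e ∈ H.edgeSet ∧ ∀ v ∈ e, v ∈ s} : ℝ) ≤ 1 := by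
        exact_mod_cast h1.trans hk
      have hs' : (3 : ℝ) ≤ s.card := by exact_mod_cast hs
      exact div_nonpos_of_nonpos_of_nonneg (by linarith) (by linarith)
    exact (one_div_nonpos.2 this).trans zero_le_two
  · push Not at hk
    obtain ⟨e, f, hef⟩ := Fintype.one_lt_card_iff.1 hk
    have hc : ({e, f} : Finset (HE H)).card = 2 := card_pair hef
    obtain ⟨h1, h2⟩ := verts_card ({e, f} : Finset (HE H)) ⟨e, by simp⟩
    have h3 : 3 ≤ (verts ({e, f} : Finset (HE H))).card := by omega
    have h4 : (verts ({e, f} : Finset (HE H))).card ≤ 4 := by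
      refine card_biUnion_le.trans ?_
      rw [sum_pair hef]
      have := card_le_two (a := e.1.1) (b := e.1.2)
      have := card_le_two (a := f.1.1) (b := f.1.2)
      omega
    have h5 := m2_edges H _ h3 ({e, f} : Finset (HE H)) (mem_verts _)
    rw [hc] at h5
    have h3' : (3 : ℝ) ≤ (verts ({e, f} : Finset (HE H))).card := by exact_mod_cast h3
    have h4' : ((verts ({e, f} : Finset (HE H))).card : ℝ) ≤ 4 := by exact_mod_cast h4
    push_cast at h5
    have : 1 / 2 ≤ m2 H := by nlinarith
    rw [div_le_iff₀ (by linarith)]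
    linarith

/-- The copy of `H` given by `ψ`, as a set of coloured edges -/
noncomputable def cpy {h n : ℕ} (H : SimpleGraph (Fin h)) (ψ : Fin h → Fin n) :
    Finset (HE H × (Fin n × Fin n)) :=
  univ.image fun e => (e, (ψ e.1.1, ψ e.1.2))

lemma mem_cpy {h n : ℕ} (H : SimpleGraph (Fin h)) (ψ : Fin h → Fin n)
    (z : HE H × (Fin n × Fin n)) :
    z ∈ cpy H ψ ↔ z.2 = (ψ z.1.1.1, ψ z.1.1.2) := by
  rw [cpy, mem_image]
  constructor
  · rintro ⟨e, _, rfl⟩; rfl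
  · intro hz
    exact ⟨z.1, mem_univ _, by rw [← hz]⟩

lemma card_cpy {h n : ℕ} (H : SimpleGraph (Fin h)) (ψ : Fin h → Fin n) :
    (cpy H ψ).card = Fintype.card (HE H) := by
  rw [cpy, card_image_of_injective, card_univ]
  intro e f hef
  exact (Prod.ext_iff.1 hef).1

lemma card_agree {h n : ℕ} (s : Finset (Fin h)) (ψ₀ : Fin h → Fin n) 
    (F : Finset (Fin h → Fin n)) (hF : ∀ ψ ∈ F, ∀ i ∈ s, ψ i = ψ₀ i) :
    F.card ≤ n ^ (h - s.card) := by
  have h1 : F.card ≤ (univ : Finset ({i // i ∉ s} → Fin n)).card := by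
    refine card_le_card_of_injOn (fun ψ i => ψ i.1) (fun _ _ => mem_coe.2 (mem_univ _)) ?_
    intro ψ hψ φ hφ he
    funext i
    by_cases hi : i ∈ s
    · rw [hF ψ hψ i hi, hF φ hφ i hi]
    · exact congrFun he ⟨i, hi⟩
  refine h1.trans (le_of_eq ?_)
  rw [card_univ, Fintype.card_fun, Fintype.card_fin, Fintype.card_subtype_compl]
  simp

lemma deg_bound {h n : ℕ} (H : SimpleGraph (Fin h)) (hn : 0 < n) (q : ℝ)
    (hq : (n : ℝ) ^ (-(1 / m2 H)) ≤ q) (S : Finset (HE H × (Fin n × Fin n))) (hS : S.Nonempty) :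
    ((univ.filter fun ψ : Fin h → Fin n => S ⊆ cpy H ψ).card : ℝ) * (n : ℝ) ^ 2 ≤
      (n : ℝ) ^ h * q ^ (S.card - 1) := by
  have hn' : (1 : ℝ) ≤ n := by exact_mod_cast hn
  have hn0 : (0 : ℝ) < n := by linarith
  have hq0 : 0 < q := lt_of_lt_of_le (Real.rpow_pos_of_pos hn0 _) hq
  rcases (univ.filter fun ψ : Fin h → Fin n => S ⊆ cpy H ψ).eq_empty_or_nonempty with he | ⟨ψ₀, h0⟩
  · rw [he, card_empty, Nat.cast_zero, zero_mul]; positivity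
  · rw [mem_filter] at h0
    have h0 := h0.2
    set S' := S.image Prod.fst with hS'
    have hcard : S'.card = S.card := by
      refine card_image_of_injOn ?_
      intro x hx y hy hxy
      have h1 := (mem_cpy H ψ₀ x).1 (h0 hx)
      have h2 := (mem_cpy H ψ₀ y).1 (h0 hy)
      refine Prod.ext hxy ?_
      rw [h1, h2, hxy]
    have hS'ne : S'.Nonempty := hS.image _
    obtain ⟨hv2, hv3⟩ := verts_card S' hS'ne
    have hvh : (verts S').card ≤ h := by simpa using card_le_univ (verts S')
    have hcnt := card_agree (verts S') ψ₀ (univ.filter fun ψ : Fin h → Fin n => S ⊆ cpy H ψ) (by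
      intro ψ hψ i hi
      rw [mem_filter] at hψ
      obtain ⟨e, he, hie⟩ := mem_biUnion.1 hi
      obtain ⟨z, hz, rfl⟩ := mem_image.1 he
      have h1 := (mem_cpy H ψ z).1 (hψ.2 hz)
      have h2 := (mem_cpy H ψ₀ z).1 (h0 hz)
      rw [h1, Prod.ext_iff] at h2
      rw [mem_insert, mem_singleton] at hie
      rcases hie with rfl | rfl
      · exact h2.1
      · exact h2.2)
    have hcnt' : ((univ.filter fun ψ : Fin h → Fin n => S ⊆ cpy H ψ).card : ℝ) ≤
        (n : ℝ) ^ (h - (verts S').card) := by exact_mod_cast hcnt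
    have key : 1 ≤ (n : ℝ) ^ ((verts S').card - 2) * q ^ (S.card - 1) := by
      by_cases h1 : S.card = 1
      · rw [h1]
        simpa using one_le_pow₀ hn'
      · have h3 : 3 ≤ (verts S').card := by
          rcases hv3 with hv3 | hv3
          · omega
          · exact hv3
        have h4 := m2_edges H _ h3 S' (mem_verts S')
        rw [hcard] at h4
        have h5 : 2 ≤ S.card := by
          have := hS.card_pos
          omega
        have h5' : (2 : ℝ) ≤ S.card := by exact_mod_cast h5
        have h3' : (3 : ℝ) ≤ (verts S').card := by exact_mod_cast h3
        have hd : 0 < m2 H := by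
          by_contra hcon
          push Not at hcon
          nlinarith
        have h6 : (n : ℝ) ^ (-(((verts S').card - 2 : ℕ) : ℝ)) ≤ q ^ (S.card - 1) := by
          calc (n : ℝ) ^ (-(((verts S').card - 2 : ℕ) : ℝ))
              ≤ (n : ℝ) ^ (-(1 / m2 H) * ((S.card - 1 : ℕ) : ℝ)) := by
                refine Real.rpow_le_rpow_of_exponent_le hn' ?_
                rw [Nat.cast_sub hv2, Nat.cast_sub (by omega)]
                push_cast
                have : (1 / m2 H) * ((S.card : ℝ) - 1) ≤ ((verts S').card : ℝ) - 2 := by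
                  rw [one_div_mul_eq_div, div_le_iff₀ hd]
                  linarith
                linarith
            _ = ((n : ℝ) ^ (-(1 / m2 H))) ^ (S.card - 1) := by
                rw [Real.rpow_mul hn0.le, Real.rpow_natCast]
            _ ≤ q ^ (S.card - 1) := by
                gcongr
        rw [Real.rpow_neg hn0.le, Real.rpow_natCast] at h6
        calc (1 : ℝ) = (n : ℝ) ^ ((verts S').card - 2) * ((n : ℝ) ^ ((verts S').card - 2))⁻¹ := by
              rw [mul_inv_cancel₀]; positivity
          _ ≤ _ := by gcongr
    calc ((univ.filter fun ψ : Fin h → Fin n => S ⊆ cpy H ψ).card : ℝ) * (n : ℝ) ^ 2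
        ≤ (n : ℝ) ^ (h - (verts S').card) * (n : ℝ) ^ 2 * 1 := by
          rw [mul_one]; gcongr
      _ ≤ (n : ℝ) ^ (h - (verts S').card) * (n : ℝ) ^ 2 *
          ((n : ℝ) ^ ((verts S').card - 2) * q ^ (S.card - 1)) := by gcongr
      _ = (n : ℝ) ^ (h - (verts S').card + 2 + ((verts S').card - 2)) * q ^ (S.card - 1) := by
          rw [pow_add, pow_add]; ring
      _ = _ := by congr 2; omega

end KLR

namespace KLR
open Finset

lemma sum_weights {A B : Type} [Fintype A] [Fintype B] (g : A → B) (P : B → Prop) :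
    (∑ y : B, if P y then ((univ.filter fun x => g x = y).card : ℝ) else 0) =
      ((univ.filter fun x => P (g x)).card : ℝ) := by
  rw [← sum_filter]
  have := card_eq_sum_card_fiberwise (f := g) (s := univ.filter fun x => P (g x))
    (t := univ.filter P) (by intro x hx; simpa using hx)
  rw [this]
  push_cast
  refine sum_congr rfl fun y hy => ?_
  congr 2
  ext x
  simp only [mem_filter, mem_univ, true_and] at hy ⊢
  constructor
  · rintro rfl; exact ⟨hy, rfl⟩
  · exact fun hx => hx.2

lemma containers_H {h : ℕ} (H : SimpleGraph (Fin h)) (k : ℕ) (hk : 0 < k)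
    (hkc : Fintype.card (HE H) = k) (γ : ℝ) (hγ : 0 < γ) : ∃ L : ℝ, 0 < L ∧
    ∀ (n : ℕ) (q : ℝ), 0 < n → (n : ℝ) ^ (-(1 / m2 H)) ≤ q →
      ∃ T D : Finset (HE H × (Fin n × Fin n)) → Finset (HE H × (Fin n × Fin n)),
        IsScheme T D ∧
        (∀ X, ((T X).card : ℝ) ≤ L * (q * (k * (n : ℝ) ^ 2) + 1)) ∧
        ∀ X, (∀ ψ : Fin h → Fin n, ¬ cpy H ψ ⊆ X) → X ⊆ D X ∧
          ((univ.filter fun ψ : Fin h → Fin n => cpy H ψ ⊆ D X).card : ℝ) < γ * (n : ℝ) ^ h := by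
  have hk' : (0 : ℝ) < k := by exact_mod_cast hk
  obtain ⟨L, hL, hcont⟩ := containers k k γ hk' hγ
  refine ⟨L, hL, fun n q hn hq => ?_⟩
  have hn0 : (0 : ℝ) < n := by exact_mod_cast hn
  have hq0 : 0 < q := lt_of_lt_of_le (Real.rpow_pos_of_pos hn0 _) hq
  obtain ⟨T, D, hTD, hT, hD⟩ := hcont (HE H × (Fin n × Fin n)) (k * (n : ℝ) ^ 2) q ((n : ℝ) ^ h)
    (fun A => ((univ.filter fun ψ : Fin h → Fin n => cpy H ψ = A).card : ℝ))
    (by positivity) hq0 (by positivity)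
    (by rw [Fintype.card_prod, Fintype.card_prod, Fintype.card_fin, hkc]
        push_cast
        apply le_of_eq
        ring)
    (fun A => Nat.cast_nonneg _)
    (by
      intro A hA
      have : (univ.filter fun ψ : Fin h → Fin n => cpy H ψ = A).Nonempty := by
        rw [nonempty_iff_ne_empty]
        rintro h0
        apply hA
        rw [h0, card_empty, Nat.cast_zero]
      obtain ⟨ψ, hψ⟩ := this
      rw [mem_filter] at hψ
      rw [← hψ.2, card_cpy, hkc])
    (by
      intro S hS
      have e1 : (∑ A, if S ⊆ A then
          ((univ.filter fun ψ : Fin h → Fin n => cpy H ψ = A).card : ℝ) else 0) =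
          ((univ.filter fun ψ : Fin h → Fin n => S ⊆ cpy H ψ).card : ℝ) := by
        convert sum_weights (cpy H) (fun A => S ⊆ A)
      have e2 : wdeg (fun A => ((univ.filter fun ψ : Fin h → Fin n => cpy H ψ = A).card : ℝ)) S =
          ((univ.filter fun ψ : Fin h → Fin n => S ⊆ cpy H ψ).card : ℝ) := by
        rw [← e1, wdeg]
        refine sum_congr rfl fun A _ => ?_
        congr
      rw [e2]
      have h1 := deg_bound H hn q hq S hS
      rw [le_div_iff₀ (by positivity)]
      calc ((univ.filter fun ψ : Fin h → Fin n => S ⊆ cpy H ψ).card : ℝ) * (k * (n : ℝ) ^ 2)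
          = k * (((univ.filter fun ψ : Fin h → Fin n => S ⊆ cpy H ψ).card : ℝ) * (n : ℝ) ^ 2) := by
            ring
        _ ≤ k * ((n : ℝ) ^ h * q ^ (S.card - 1)) := by gcongr
        _ = _ := by ring)
  refine ⟨T, D, hTD, hT, fun X hX => ?_⟩
  have h2 := hD X (by
    intro A hA hAX
    apply hA
    rw [Nat.cast_eq_zero, card_eq_zero, filter_eq_empty_iff]
    rintro ψ _ rfl
    exact hX ψ hAX)
  refine ⟨h2.1, ?_⟩
  have h3 := h2.2
  have e1 : (∑ A, if A ⊆ D X then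
      ((univ.filter fun ψ : Fin h → Fin n => cpy H ψ = A).card : ℝ) else 0) =
      ((univ.filter fun ψ : Fin h → Fin n => cpy H ψ ⊆ D X).card : ℝ) := by
    convert sum_weights (cpy H) (fun A => A ⊆ D X)
  rw [← e1]
  refine lt_of_eq_of_lt (sum_congr rfl fun A _ => ?_) h3
  congr

lemma regular_count {n : ℕ} {κ : Type} [Fintype κ] (c : Fin n → κ) (P : κ × κ → Prop)
    (X : Finset (Fin n × Fin n)) (p ε : ℝ) (hp : 0 ≤ p) (k Q : ℕ) (hk : 0 < k)
    (hQ : Fintype.card κ ≤ Q) (hε0 : 0 ≤ ε) (hε : 2 * Q * ε ≤ 1 / (4 * k))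
    (hX : ∀ A B : Finset (Fin n), ε * n ≤ (A.card : ℝ) → ε * n ≤ (B.card : ℝ) →
      p / 2 * (A.card * B.card) ≤ ((X.filter fun z => z.1 ∈ A ∧ z.2 ∈ B).card : ℝ))
    (hP : (n : ℝ) ^ 2 / (2 * k) ≤ ((univ.filter fun z : Fin n × Fin n => P (pcol c z)).card : ℝ)) :
    p * (n : ℝ) ^ 2 / (8 * k) ≤ ((X.filter fun z => P (pcol c z)).card : ℝ) := by
  have hk' : (0 : ℝ) < k := by exact_mod_cast hk
  set cl : κ → Finset (Fin n) := fun u => univ.filter fun x => c x = u with hcl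
  have hfib : ∀ Z : Finset (Fin n × Fin n), ((Z.filter fun z => P (pcol c z)).card : ℝ) =
      ∑ w ∈ univ.filter P, ((Z.filter fun z => z.1 ∈ cl w.1 ∧ z.2 ∈ cl w.2).card : ℝ) := by
    intro Z
    have := card_eq_sum_card_fiberwise (f := pcol c) (s := Z.filter fun z => P (pcol c z))
      (t := univ.filter P) (by intro x hx; simpa using (mem_filter.1 hx).2)
    rw [this]
    push_cast
    refine sum_congr rfl fun w hw => ?_
    congr 2
    ext z
    have hw' : P w := (mem_filter.1 hw).2
    have hmem : ∀ x u, x ∈ cl u ↔ c x = u := fun x u => by simp [hcl]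
    rw [mem_filter, mem_filter, mem_filter, hmem, hmem]
    constructor
    · rintro ⟨⟨h1, h2⟩, rfl⟩; exact ⟨h1, rfl, rfl⟩
    · rintro ⟨h1, h2, h3⟩
      have h4 : (c z.1, c z.2) = w := Prod.ext h2 h3
      exact ⟨⟨h1, by rw [pcol, h4]; exact hw'⟩, h4⟩
  have huniv : ∀ w : κ × κ, (((univ : Finset (Fin n × Fin n)).filter
      fun z => z.1 ∈ cl w.1 ∧ z.2 ∈ cl w.2).card : ℝ) = (cl w.1).card * (cl w.2).card := by
    intro w
    rw [← Nat.cast_mul, ← card_product]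
    congr 2
    ext z
    simp
  have hterm : ∀ w : κ × κ, p / 2 * ((cl w.1).card * (cl w.2).card) ≤
      ((X.filter fun z => z.1 ∈ cl w.1 ∧ z.2 ∈ cl w.2).card : ℝ) +
        p / 2 * (ε * n * ((cl w.1).card + (cl w.2).card)) := by
    intro w
    have h1 : (0 : ℝ) ≤ (cl w.1).card := Nat.cast_nonneg _
    have h2 : (0 : ℝ) ≤ (cl w.2).card := Nat.cast_nonneg _
    have h3 : (0 : ℝ) ≤ ((X.filter fun z => z.1 ∈ cl w.1 ∧ z.2 ∈ cl w.2).card : ℝ) :=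
      Nat.cast_nonneg _
    have hp2 : 0 ≤ p / 2 := by linarith
    have hen : 0 ≤ ε * n := by positivity
    by_cases ha : ε * n ≤ ((cl w.1).card : ℝ)
    · by_cases hb : ε * n ≤ ((cl w.2).card : ℝ)
      · have := hX _ _ ha hb
        have h4 : 0 ≤ p / 2 * (ε * n * ((cl w.1).card + (cl w.2).card)) := by positivity
        linarith
      · push Not at hb
        have h5 : ((cl w.1).card * (cl w.2).card : ℝ) ≤
            ε * n * ((cl w.1).card + (cl w.2).card) := by nlinarith
        have := mul_le_mul_of_nonneg_left h5 hp2
        linarith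
    · push Not at ha
      have h5 : ((cl w.1).card * (cl w.2).card : ℝ) ≤
          ε * n * ((cl w.1).card + (cl w.2).card) := by nlinarith
      have := mul_le_mul_of_nonneg_left h5 hp2
      linarith
  have hcls : ∑ u, ((cl u).card : ℝ) = n := by
    have := card_eq_sum_card_fiberwise (f := c) (s := (univ : Finset (Fin n)))
      (t := univ) (by intro x _; simp)
    rw [card_univ, Fintype.card_fin] at this
    exact_mod_cast this.symm
  have hall : ∑ w : κ × κ, (((cl w.1).card : ℝ) + (cl w.2).card) = 2 * Fintype.card κ * n := by
    rw [Fintype.sum_prod_type]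
    simp only [sum_add_distrib, sum_const, card_univ, nsmul_eq_mul, hcls]
    rw [← mul_sum, hcls]
    ring
  have hsum := sum_le_sum fun w (_ : w ∈ univ.filter P) => hterm w
  rw [sum_add_distrib, ← mul_sum, ← mul_sum, ← mul_sum, ← hfib X,
    ← sum_congr rfl (fun w _ => huniv w), ← hfib univ] at hsum
  have hle : ∑ w ∈ univ.filter P, (((cl w.1).card : ℝ) + (cl w.2).card) ≤ 2 * Q * n := by
    calc _ ≤ ∑ w : κ × κ, (((cl w.1).card : ℝ) + (cl w.2).card) :=
          sum_le_sum_of_subset_of_nonneg (subset_univ _) fun _ _ _ => by positivity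
      _ = 2 * Fintype.card κ * n := hall
      _ ≤ _ := by gcongr
  have h7 : p / 2 * (ε * n * ∑ w ∈ univ.filter P, (((cl w.1).card : ℝ) + (cl w.2).card)) ≤
      p / 2 * ((n : ℝ) ^ 2 / (4 * k)) := by
    have hen : 0 ≤ ε * n := by positivity
    refine mul_le_mul_of_nonneg_left ?_ (by linarith)
    calc _ ≤ ε * n * (2 * Q * n) := mul_le_mul_of_nonneg_left hle hen
      _ = (2 * Q * ε) * (n : ℝ) ^ 2 := by ring
      _ ≤ 1 / (4 * k) * (n : ℝ) ^ 2 := by gcongr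
      _ = _ := by ring
  have h8 := mul_le_mul_of_nonneg_left hP (by linarith : 0 ≤ p / 2)
  have h9 : p * (n : ℝ) ^ 2 / (8 * k) = p / 2 * ((n : ℝ) ^ 2 / (2 * k)) -
      p / 2 * ((n : ℝ) ^ 2 / (4 * k)) := by field_simp; ring
  linarith

/-- the bipartite graphs of `G`, indexed by the edges of `H` -/
noncomputable def XG {h n : ℕ} (H : SimpleGraph (Fin h)) (G : SimpleGraph (Fin h × Fin n))
    (e : HE H) : Finset (Fin n × Fin n) :=
  univ.filter fun z => G.Adj (e.1.1, z.1) (e.1.2, z.2)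

lemma bip_XG {h n : ℕ} (H : SimpleGraph (Fin h)) (G : SimpleGraph (Fin h × Fin n))
    (e : HE H) (A B : Finset (Fin n)) :
    bipCount G (A.image fun x => (e.1.1, x)) (B.image fun x => (e.1.2, x)) =
      ((XG H G e).filter fun z => z.1 ∈ A ∧ z.2 ∈ B).card := by
  rw [bipCount, ← Fintype.card_coe, ← Nat.card_eq_fintype_card]
  symm
  refine Nat.card_eq_of_bijective (fun z => ⟨((e.1.1, z.1.1), (e.1.2, z.1.2)), ?_⟩) ⟨?_, ?_⟩
  · have hz := z.2
    simp only [XG, mem_filter, mem_univ, true_and] at hz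
    exact ⟨mem_image_of_mem _ hz.2.1, mem_image_of_mem _ hz.2.2, hz.1⟩
  · intro z w hzw
    have := congrArg Subtype.val hzw
    simp only [Prod.mk.injEq, true_and] at this
    exact Subtype.ext (Prod.ext this.1 this.2)
  · rintro ⟨⟨u, v⟩, hu, hv, huv⟩
    obtain ⟨x, hx, rfl⟩ := mem_image.1 hu
    obtain ⟨y, hy, rfl⟩ := mem_image.1 hv
    refine ⟨⟨(x, y), ?_⟩, rfl⟩
    simp only [XG, mem_filter, mem_univ, true_and]
    exact ⟨huv, hx, hy⟩

lemma fibre_eq {h n : ℕ} (i : Fin h) :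
    fibre h n i = (univ : Finset (Fin n)).image fun x => (i, x) := by
  ext ⟨j, x⟩
  simp [fibre, eq_comm]

lemma card_img {h n : ℕ} (i : Fin h) (A : Finset (Fin n)) :
    (A.image fun x => (i, x)).card = A.card :=
  card_image_of_injective _ fun _ _ hxy => (Prod.ext_iff.1 hxy).2

lemma XG_card {h n m : ℕ} (H : SimpleGraph (Fin h)) (G : SimpleGraph (Fin h × Fin n)) (p ε : ℝ)
    (hG : InKLRFamily H m p ε G) (e : HE H) : (XG H G e).card = m := by
  have h1 := (hG.2 _ _ e.2.2).1
  rw [fibre_eq, fibre_eq, bip_XG] at h1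
  simpa using h1

lemma XG_reg {h n m : ℕ} (hn : 0 < n) (H : SimpleGraph (Fin h)) (G : SimpleGraph (Fin h × Fin n))
    (ε : ℝ) (hε0 : 0 < ε) (hε : ε ≤ 1 / 2) (hG : InKLRFamily H m ((m : ℝ) / (n : ℝ) ^ 2) ε G)
    (e : HE H) (A B : Finset (Fin n)) (hA : ε * n ≤ (A.card : ℝ)) (hB : ε * n ≤ (B.card : ℝ)) :
    (m : ℝ) / (n : ℝ) ^ 2 / 2 * (A.card * B.card) ≤
      (((XG H G e).filter fun z => z.1 ∈ A ∧ z.2 ∈ B).card : ℝ) := by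
  have hn0 : (0 : ℝ) < n := by exact_mod_cast hn
  have hA0 : (0 : ℝ) < A.card := lt_of_lt_of_le (by positivity) hA
  have hB0 : (0 : ℝ) < B.card := lt_of_lt_of_le (by positivity) hB
  have hc := (hG.2 _ _ e.2.2).1
  have hr := (hG.2 _ _ e.2.2).2 (A.image fun x => (e.1.1, x))
    (by rw [fibre_eq]; exact image_subset_image (subset_univ _)) (B.image fun x => (e.1.2, x))
    (by rw [fibre_eq]; exact image_subset_image (subset_univ _))
  rw [bipDensity, bipDensity, hc, bip_XG, fibre_eq, fibre_eq] at hr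
  simp only [card_img, card_univ, Fintype.card_fin] at hr
  have h1 := (abs_le.1 (hr hA hB)).1
  have hp : 0 ≤ (m : ℝ) / (n : ℝ) ^ 2 := by positivity
  have h2 : (m : ℝ) / (n * n) = (m : ℝ) / (n : ℝ) ^ 2 := by rw [pow_two]
  rw [h2] at h1
  have h3 : (m : ℝ) / (n : ℝ) ^ 2 / 2 ≤
      (((XG H G e).filter fun z => z.1 ∈ A ∧ z.2 ∈ B).card : ℝ) / (A.card * B.card) := by
    nlinarith
  rwa [le_div_iff₀ (by positivity)] at h3

lemma XG_inj {h n : ℕ} (H : SimpleGraph (Fin h)) (G G' : SimpleGraph (Fin h × Fin n))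
    (hG : ∀ a b, G.Adj a b → H.Adj a.1 b.1) (hG' : ∀ a b, G'.Adj a b → H.Adj a.1 b.1)
    (hX : XG H G = XG H G') : G = G' := by
  have key : ∀ e : HE H, ∀ x y, G.Adj (e.1.1, x) (e.1.2, y) ↔ G'.Adj (e.1.1, x) (e.1.2, y) := by
    intro e x y
    have := congrArg (fun F => (x, y) ∈ F e) hX
    simpa [XG] using this
  have key2 : ∀ i j x y, H.Adj i j → (G.Adj (i, x) (j, y) ↔ G'.Adj (i, x) (j, y)) := by
    intro i j x y hij
    rcases lt_trichotomy i j with hlt | heq | hgt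
    · exact key ⟨(i, j), hlt, hij⟩ x y
    · exact absurd heq hij.ne
    · rw [G.adj_comm, G'.adj_comm]
      exact key ⟨(j, i), hgt, hij.symm⟩ y x
  ext ⟨i, x⟩ ⟨j, y⟩
  constructor
  · intro hadj; exact (key2 i j x y (hG _ _ hadj)).1 hadj
  · intro hadj; exact (key2 i j x y (hG' _ _ hadj)).2 hadj

/-- pack a family of sets -/
noncomputable def pack {E V : Type} [Fintype E] [Fintype V] (X : E → Finset V) : Finset (E × V) :=
  univ.filter fun z => z.2 ∈ X z.1

/-- the slices of a set -/
noncomputable def slice {E V : Type} [Fintype V] (S : Finset (E × V)) (e : E) : Finset V :=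
  univ.filter fun v => (e, v) ∈ S

lemma mem_pack {E V : Type} [Fintype E] [Fintype V] (X : E → Finset V) (z : E × V) :
    z ∈ pack X ↔ z.2 ∈ X z.1 := by simp [pack]

lemma mem_slice {E V : Type} [Fintype V] (S : Finset (E × V)) (e : E) (v : V) :
    v ∈ slice S e ↔ (e, v) ∈ S := by simp [slice]

lemma pack_slice {E V : Type} [Fintype E] [Fintype V] (S : Finset (E × V)) :
    pack (slice S) = S := by
  ext ⟨e, v⟩
  rw [mem_pack, mem_slice]

lemma card_slice {E V : Type} [Fintype V] (S : Finset (E × V)) (e : E) :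
    (slice S e).card ≤ S.card := by
  refine card_le_card_of_injOn (fun v => (e, v)) (fun v hv => (mem_slice S e v).1 hv) ?_
  intro x _ y _ hxy
  exact (Prod.ext_iff.1 hxy).2

lemma cpy_subset {h n : ℕ} (H : SimpleGraph (Fin h)) (ψ : Fin h → Fin n)
    (S : Finset (HE H × (Fin n × Fin n))) :
    cpy H ψ ⊆ S ↔ ∀ e : HE H, (ψ e.1.1, ψ e.1.2) ∈ slice S e := by
  constructor
  · intro hs e
    rw [mem_slice]
    exact hs ((mem_cpy _ _ _).2 rfl)
  · intro hs z hz
    have h1 := hs z.1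
    rw [mem_slice, ← (mem_cpy _ _ _).1 hz] at h1
    exact h1

lemma XG_indep {h n : ℕ} (H : SimpleGraph (Fin h)) (G : SimpleGraph (Fin h × Fin n))
    (hG : ¬ HasCanonicalCopy H G) (ψ : Fin h → Fin n) : ¬ cpy H ψ ⊆ pack (XG H G) := by
  intro hs
  rw [cpy_subset] at hs
  have key : ∀ e : HE H, G.Adj (e.1.1, ψ e.1.1) (e.1.2, ψ e.1.2) := by
    intro e
    have := hs e
    rw [mem_slice, mem_pack] at this
    simpa [XG] using this
  refine hG ⟨ψ, fun i j hij => ?_⟩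
  rcases lt_trichotomy i j with hlt | heq | hgt
  · exact key ⟨(i, j), hlt, hij⟩
  · exact absurd heq hij.ne
  · exact (key ⟨(j, i), hgt, hij.symm⟩).symm

end KLR

namespace KLR
open Finset

lemma core_count {h n m : ℕ} (H : SimpleGraph (Fin h)) (k Q : ℕ) (hk : 0 < k) (hn : 0 < n)
    (hkc : Fintype.card (HE H) = k) (α ε : ℝ) (hα : 0 < α) (hα2 : 2 * α ≤ 1)
    (hε0 : 0 < ε) (hε1 : ε ≤ 1 / 2) (hε2 : 2 * Q * ε ≤ 1 / (4 * k))
    (hdense : ∀ C : HE H → Finset (Fin n × Fin n),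
      ((univ.filter fun ψ : Fin h → Fin n => ∀ e : HE H, (ψ e.1.1, ψ e.1.2) ∈ C e).card : ℝ) <
      α ^ k / 4 * (n : ℝ) ^ h →
      ∃ (κ : Type) (_ : Fintype κ) (c : Fin n → κ) (e : HE H) (P : κ × κ → Prop),
        Fintype.card κ ≤ Q ∧
        (n : ℝ) ^ 2 / (2 * k) ≤ ((univ.filter fun z : Fin n × Fin n => P (pcol c z)).card : ℝ) ∧
        (((C e).filter fun z => P (pcol c z)).card : ℝ) ≤ α * (n : ℝ) ^ 2)
    (T D : Finset (HE H × (Fin n × Fin n)) → Finset (HE H × (Fin n × Fin n)))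
    (hTD : IsScheme T D) (hT : ∀ X, ((T X).card : ℝ) ≤ (m : ℝ) / (16 * k))
    (hD : ∀ X, (∀ ψ : Fin h → Fin n, ¬ cpy H ψ ⊆ X) → X ⊆ D X ∧
      ((univ.filter fun ψ : Fin h → Fin n => cpy H ψ ⊆ D X).card : ℝ) <
        α ^ k / 4 * (n : ℝ) ^ h) :
    (Nat.card {G : SimpleGraph (Fin h × Fin n) //
            InKLRFamily H m ((m : ℝ) / (n : ℝ) ^ 2) ε G ∧ ¬ HasCanonicalCopy H G} : ℝ) ≤
      (2 ^ m) ^ (k + 1) * (2 * α) ^ ⌈(m : ℝ) / (16 * k)⌉₊ * ((n ^ 2).choose m : ℝ) ^ k := by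
  have hk' : (1 : ℝ) ≤ k := by exact_mod_cast hk
  have hn0 : (0 : ℝ) < n := by exact_mod_cast hn
  have hVc : Fintype.card (Fin n × Fin n) = n ^ 2 := by
    rw [Fintype.card_prod, Fintype.card_fin, pow_two]
  obtain ⟨e₀⟩ : Nonempty (HE H) := Fintype.card_pos_iff.1 (by omega)
  have hex : ∀ S : HE H → Finset (Fin n × Fin n), ∃ (e : HE H) (Y : Finset (Fin n × Fin n)),
      ((univ.filter fun ψ : Fin h → Fin n => cpy H ψ ⊆ D (pack S)).card : ℝ) <
        α ^ k / 4 * (n : ℝ) ^ h →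
      ∃ (κ : Type) (_ : Fintype κ) (c : Fin n → κ) (P : κ × κ → Prop),
        Fintype.card κ ≤ Q ∧
        (n : ℝ) ^ 2 / (2 * k) ≤ ((univ.filter fun z : Fin n × Fin n => P (pcol c z)).card : ℝ) ∧
        (Y.card : ℝ) ≤ α * (n : ℝ) ^ 2 ∧
        ∀ z, z ∈ Y ↔ z ∈ slice (D (pack S)) e ∧ P (pcol c z) := by
    intro S
    by_cases hS : ((univ.filter fun ψ : Fin h → Fin n => cpy H ψ ⊆ D (pack S)).card : ℝ) <
        α ^ k / 4 * (n : ℝ) ^ h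
    · obtain ⟨κ, iκ, c, e, P, h1, h2, h3⟩ := hdense (slice (D (pack S))) (by
        refine lt_of_eq_of_lt ?_ hS
        congr 2
        ext ψ
        rw [mem_filter, mem_filter, cpy_subset])
      exact ⟨e, _, fun _ => ⟨κ, iκ, c, P, h1, h2, h3, fun z => mem_filter⟩⟩
    · exact ⟨e₀, ∅, fun hc => absurd hc hS⟩
  choose et Y hY using hex
  set 𝒳 : Finset (HE H → Finset (Fin n × Fin n)) := univ.filter fun X =>
    ∃ G : SimpleGraph (Fin h × Fin n), (InKLRFamily H m ((m : ℝ) / (n : ℝ) ^ 2) ε G ∧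
      ¬ HasCanonicalCopy H G) ∧ XG H G = X with h𝒳
  have hle : Nat.card {G : SimpleGraph (Fin h × Fin n) //
      InKLRFamily H m ((m : ℝ) / (n : ℝ) ^ 2) ε G ∧ ¬ HasCanonicalCopy H G} ≤ 𝒳.card := by
    rw [← Fintype.card_coe, ← Nat.card_eq_fintype_card]
    refine Nat.card_le_card_of_injective (fun G => (⟨XG H G.1, ?_⟩ : 𝒳)) ?_
    · rw [h𝒳, mem_filter]
      exact ⟨mem_univ _, G.1, G.2, rfl⟩
    · intro G G' hGG
      exact Subtype.ext (XG_inj H _ _ G.2.1.1 G'.2.1.1 (congrArg Subtype.val hGG))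
  have hmain := family_count m ⌈(m : ℝ) / (16 * k)⌉₊ (2 * α) (by linarith) hα2 et Y 𝒳 (by
    intro X hX
    rw [h𝒳, mem_filter] at hX
    obtain ⟨_, G, ⟨hG, hcan⟩, rfl⟩ := hX
    have hXc := XG_card H G _ ε hG
    refine ⟨hXc, slice (T (pack (XG H G))), ?_, ?_⟩
    · intro f v hv
      have := hTD.1 _ ((mem_slice _ _ _).1 hv)
      rwa [mem_pack] at this
    · set S := slice (T (pack (XG H G))) with hS
      have hpS : pack S = T (pack (XG H G)) := pack_slice _
      have hDS : D (pack S) = D (pack (XG H G)) := by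
        rw [hpS]
        exact (hTD.2 _ _ (Subset.refl _) (hTD.1 _)).2
      obtain ⟨hsub, hfew⟩ := hD _ (XG_indep H G hcan)
      obtain ⟨κ, iκ, c, P, h1, h2, h3, h4⟩ := hY S (by rw [hDS]; exact hfew)
      have hTe : ((S (et S)).card : ℝ) ≤ (m : ℝ) / (16 * k) := by
        refine le_trans ?_ (hT (pack (XG H G)))
        exact_mod_cast card_slice _ _
      have hinter : XG H G (et S) ∩ Y S = (XG H G (et S)).filter fun z => P (pcol c z) := by
        ext z
        rw [mem_inter, mem_filter, h4]
        constructor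
        · rintro ⟨h5, _, h6⟩; exact ⟨h5, h6⟩
        · rintro ⟨h5, h6⟩
          refine ⟨h5, ?_, h6⟩
          rw [mem_slice, hDS]
          exact hsub ((mem_pack _ _).2 h5)
      have hreg := regular_count c P (XG H G (et S)) ((m : ℝ) / (n : ℝ) ^ 2) ε (by positivity)
        k Q hk h1 hε0.le hε2 (fun A B hA hB => XG_reg hn H G ε hε0 hε1 hG (et S) A B hA hB) h2
      rw [div_mul_cancel₀ _ (by positivity)] at hreg
      have hm2 : (m : ℝ) ≤ (n : ℝ) ^ 2 := by
        have := card_le_univ (XG H G (et S))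
        rw [hXc, hVc] at this
        exact_mod_cast this
      have h8 : (m : ℝ) / (8 * k) = (m : ℝ) / (16 * k) + (m : ℝ) / (16 * k) := by
        field_simp; ring
      have hm16 : (m : ℝ) / (16 * k) ≤ (n : ℝ) ^ 2 / 2 := by
        rw [div_le_div_iff₀ (by positivity) (by norm_num)]
        have hm0 : (0 : ℝ) ≤ m := Nat.cast_nonneg _
        nlinarith
      constructor
      · suffices hs : (S (et S)).card + ⌈(m : ℝ) / (16 * k)⌉₊ ≤
            ((XG H G (et S)).filter fun z => P (pcol c z)).card by
          rw [← hinter] at hs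
          convert hs
        have h9 : ((S (et S)).card : ℝ) ≤
            (((XG H G (et S)).filter fun z => P (pcol c z)).card : ℝ) := by
          have : (0 : ℝ) ≤ (m : ℝ) / (16 * k) := by positivity
          linarith
        have h9' : (S (et S)).card ≤ ((XG H G (et S)).filter fun z => P (pcol c z)).card := by
          exact_mod_cast h9
        have h10 : ⌈(m : ℝ) / (16 * k)⌉₊ ≤
            ((XG H G (et S)).filter fun z => P (pcol c z)).card - (S (et S)).card := by
          rw [Nat.ceil_le, Nat.cast_sub h9']
          linarith
        omega
      · rw [hVc, Nat.cast_sub (by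
          have : ((S (et S)).card : ℝ) ≤ (n : ℝ) ^ 2 := by nlinarith
          exact_mod_cast this)]
        push_cast
        nlinarith)
  rw [hkc, hVc] at hmain
  exact le_trans (by exact_mod_cast hle) hmain

end KLR

/-- Theorem 1.8: the Kohayakawa–Łuczak–Rödl conjecture. -/
theorem KLR_conjecture {h : ℕ} (hh : 3 ≤ h) (H : SimpleGraph (Fin h))
    (hedge : H.edgeSet.Nonempty) (β : ℝ) (hβ : 0 < β) :
    ∃ C : ℝ, 0 < C ∧ ∃ n₀ : ℕ, ∃ ε : ℝ, 0 < ε ∧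
      ∀ n : ℕ, n₀ ≤ n → ∀ m : ℕ, C * (n : ℝ) ^ ((2 : ℝ) - 1 / m2 H) ≤ (m : ℝ) →
        (Nat.card {G : SimpleGraph (Fin h × Fin n) //
            InKLRFamily H m ((m : ℝ) / (n : ℝ) ^ 2) ε G ∧ ¬ HasCanonicalCopy H G} : ℝ)
          ≤ β ^ m * (Nat.choose (n ^ 2) m : ℝ) ^ (Nat.card H.edgeSet) := by
  rw [KLR.card_HE]
  obtain ⟨k, hkc⟩ : ∃ k, Fintype.card (KLR.HE H) = k := ⟨_, rfl⟩
  have hk : 0 < k := by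
    rw [← hkc, ← KLR.card_HE]
    have : Nonempty H.edgeSet := hedge.to_subtype
    exact Nat.card_pos
  rw [hkc]
  have hk1 : (1 : ℝ) ≤ k := by exact_mod_cast hk
  have hk0 : (0 : ℝ) < k := by linarith
  obtain ⟨b, hb0, hb1, hb2⟩ : ∃ b : ℝ, 0 < b ∧ b ≤ 1 ∧ 2 ^ (k + 1) * b ≤ β := by
    refine ⟨min 1 (β / 2 ^ (k + 1)), lt_min one_pos (by positivity), min_le_left _ _, ?_⟩
    calc 2 ^ (k + 1) * min 1 (β / 2 ^ (k + 1)) ≤ 2 ^ (k + 1) * (β / 2 ^ (k + 1)) := by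
          gcongr; exact min_le_right _ _
      _ = β := by field_simp
  obtain ⟨α, hα, hαb⟩ : ∃ α : ℝ, 0 < α ∧ 2 * α = b ^ (16 * k) :=
    ⟨b ^ (16 * k) / 2, by positivity, by ring⟩
  have hα2 : 2 * α ≤ 1 := by rw [hαb]; exact pow_le_one₀ hb0.le hb1
  obtain ⟨Q, hQ0, hQ⟩ := KLR.dense_lemma (h := h) hk α hα
  have hQ0' : (0 : ℝ) < Q := by exact_mod_cast hQ0
  obtain ⟨L, hL, hcont⟩ := KLR.containers_H H k hk hkc (α ^ k / 4) (by positivity)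
  obtain ⟨ε, hε0, hε1, hε2⟩ : ∃ ε : ℝ, 0 < ε ∧ ε ≤ 1 / 2 ∧ 2 * Q * ε ≤ 1 / (4 * k) := by
    refine ⟨min (1 / 2) (1 / (8 * k * Q)), lt_min (by norm_num) (by positivity),
      min_le_left _ _, ?_⟩
    calc 2 * (Q : ℝ) * min (1 / 2) (1 / (8 * (k : ℝ) * Q)) ≤ 2 * Q * (1 / (8 * k * Q)) := by
          gcongr; exact min_le_right _ _
      _ = 1 / (4 * k) := by field_simp; norm_num
  refine ⟨32 * k ^ 2 * L, by positivity, 1, ε, hε0, fun n hn m hm => ?_⟩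
  have hn' : 0 < n := hn
  have hn1 : (1 : ℝ) ≤ n := by exact_mod_cast hn
  have hn0 : (0 : ℝ) < n := by linarith
  have hmC : 32 * k ^ 2 * L ≤ (m : ℝ) := by
    refine le_trans ?_ hm
    have : (1 : ℝ) ≤ (n : ℝ) ^ ((2 : ℝ) - 1 / m2 H) :=
      Real.one_le_rpow hn1 (by linarith [KLR.m2_range hh H])
    exact le_mul_of_one_le_right (by positivity) this
  have hq : (n : ℝ) ^ (-(1 / m2 H)) ≤ (m : ℝ) / (32 * k ^ 2 * L * (n : ℝ) ^ 2) := by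
    rw [le_div_iff₀ (by positivity)]
    refine le_trans (le_of_eq ?_) hm
    rw [sub_eq_add_neg, Real.rpow_add hn0, Real.rpow_two]
    ring
  obtain ⟨T, D, hTD, hT, hD⟩ := hcont n _ hn' hq
  have hT' : ∀ X, ((T X).card : ℝ) ≤ (m : ℝ) / (16 * k) := by
    intro X
    refine (hT X).trans ?_
    have h1 : L * ((m : ℝ) / (32 * k ^ 2 * L * (n : ℝ) ^ 2) * (k * (n : ℝ) ^ 2) + 1) =
        (m : ℝ) / (32 * k) + L := by
      field_simp
    have h2 : (m : ℝ) / (16 * k) = (m : ℝ) / (32 * k) + (m : ℝ) / (32 * k) := by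
      field_simp; ring
    have h3 : L ≤ (m : ℝ) / (32 * k) := by
      rw [le_div_iff₀ (by positivity)]
      have : (k : ℝ) * L ≤ k ^ 2 * L := by
        have : (k : ℝ) ≤ k ^ 2 := by nlinarith
        gcongr
      linarith
    rw [h1, h2]
    linarith
  have hcount := KLR.core_count (m := m) H k Q hk hn' hkc α ε hα hα2 hε0 hε1 hε2
    (hQ hkc (fun e : KLR.HE H => e.1.1) (fun e => e.1.2) (fun e => e.2.1)
      (fun e f h1 h2 => KLR.HE_ext e f h1 h2) n hn') T D hTD hT' hD
  refine hcount.trans ?_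
  refine mul_le_mul_of_nonneg_right ?_ (by positivity)
  have h5 : (2 * α) ^ ⌈(m : ℝ) / (16 * k)⌉₊ ≤ b ^ m := by
    rw [hαb, ← pow_mul]
    refine pow_le_pow_of_le_one hb0.le hb1 ?_
    have h6 := Nat.le_ceil ((m : ℝ) / (16 * k))
    rw [div_le_iff₀ (by positivity)] at h6
    have h7 : (m : ℝ) ≤ ((16 * k * ⌈(m : ℝ) / (16 * k)⌉₊ : ℕ) : ℝ) := by
      push_cast
      linarith
    exact_mod_cast h7
  calc ((2 : ℝ) ^ m) ^ (k + 1) * (2 * α) ^ ⌈(m : ℝ) / (16 * k)⌉₊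
      ≤ ((2 : ℝ) ^ m) ^ (k + 1) * b ^ m := by gcongr
    _ = (2 ^ (k + 1) * b) ^ m := by rw [mul_pow, ← pow_mul, ← pow_mul, mul_comm m]
    _ ≤ β ^ m := by gcongr
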